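/- Let F : 𝕋 → ℂ be absolutely continuous with Ḟ ∈ L¹(𝕋), and let f = P[F] be its Poisson integral. Then f_z and the conjugate of f_z̄ belong to the analytic Hardy space H¹(𝔻) if and only if the Hilbert transform H(Ḟ) belongs to L¹(𝕋); and in that case 2 i z f_z(z) = P[Ḟ + i H(Ḟ)](z) for all z ∈ 𝔻. -/

import Mathlib

open MeasureTheory Complex Metric Set Filter
open scoped Real Topology ENNReal

noncomputable section

/-- The Poisson kernel `P(z) = (1-|z|^2)/|1-z|^2`. -/
def poissonKer (z : ℂ) : ℝ := (1 - ‖z‖ ^ 2) / ‖1 - z‖ ^ 2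

/-- The Poisson integral of a boundary function `F` defined on the unit circle. -/
def poissonInt (F : ℂ → ℂ) (z : ℂ) : ℂ :=
  (1 / (2 * π)) * ∫ t in (0:ℝ)..(2 * π),
    (poissonKer (z * Complex.exp (-(t : ℂ) * Complex.I)) : ℂ) *
      F (Complex.exp ((t : ℂ) * Complex.I))

/-- The Poisson integral of a (2π-periodic) function of the angular variable. -/
def poissonIntR (φ : ℝ → ℂ) (z : ℂ) : ℂ :=
  (1 / (2 * π)) * ∫ t in (0:ℝ)..(2 * π),
    (poissonKer (z * Complex.exp (-(t : ℂ) * Complex.I)) : ℂ) * φ t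

/-- The conjugate Poisson kernel `P̃(z) = Im((1+z)/(1-z))`. -/
def conjPoissonKer (z : ℂ) : ℝ := ((1 + z) / (1 - z)).im

/-- The conjugate Poisson integral of a function of the angular variable. -/
def conjPoissonIntR (φ : ℝ → ℂ) (z : ℂ) : ℂ :=
  (1 / (2 * π)) * ∫ t in (0:ℝ)..(2 * π),
    (conjPoissonKer (z * Complex.exp (-(t : ℂ) * Complex.I)) : ℂ) * φ t

/-- Wirtinger derivative `f_z = (1/2)(∂ₓ - i ∂_y) f`. -/
def wdz (f : ℂ → ℂ) (z : ℂ) : ℂ :=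
  (1 / 2) * (fderiv ℝ f z 1 - Complex.I * fderiv ℝ f z Complex.I)

/-- Wirtinger derivative `f_z̄ = (1/2)(∂ₓ + i ∂_y) f`. -/
def wdzb (f : ℂ → ℂ) (z : ℂ) : ℂ :=
  (1 / 2) * (fderiv ℝ f z 1 + Complex.I * fderiv ℝ f z Complex.I)

/-- The angular derivative `f_θ(z) = i (z f_z(z) - z̄ f_z̄(z))`. -/
def fTheta (f : ℂ → ℂ) (z : ℂ) : ℂ :=
  Complex.I * (z * wdz f z - (starRingEnd ℂ) z * wdzb f z)

/-- The radial derivative multiplied by `r`: `r f_r(z) = z f_z(z) + z̄ f_z̄(z)`. -/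
def rFr (f : ℂ → ℂ) (z : ℂ) : ℂ :=
  z * wdz f z + (starRingEnd ℂ) z * wdzb f z

/-- `F : 𝕋 → ℂ` is absolutely continuous with angular derivative `Ḟ = Fd`,
i.e. `t ↦ F(e^{it})` is an indefinite integral of the (locally integrable,
2π-periodic) function `Fd`. -/
def IsACDeriv (F : ℂ → ℂ) (Fd : ℝ → ℂ) : Prop :=
  (∀ a b : ℝ, IntervalIntegrable Fd MeasureTheory.volume a b) ∧
  Function.Periodic Fd (2 * π) ∧
  ∀ t : ℝ, F (Complex.exp ((t : ℂ) * Complex.I)) = F 1 + ∫ s in (0:ℝ)..t, Fd s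

/-- membership in `L^p(𝕋)`, identifying `𝕋` with `[0, 2π)`. -/
def MemLpT (p : ℝ≥0∞) (φ : ℝ → ℂ) : Prop :=
  MeasureTheory.MemLp φ p (MeasureTheory.volume.restrict (Ioc (0:ℝ) (2 * π)))

/-- The integral mean `M_p(r, g)`. -/
def Mp (p : ℝ) (g : ℂ → ℂ) (r : ℝ) : ℝ :=
  ((1 / (2 * π)) * ∫ θ in (0:ℝ)..(2 * π),
      ‖g ((r : ℂ) * Complex.exp ((θ : ℂ) * Complex.I))‖ ^ p) ^ (1 / p)

/-- The `L^p(𝕋)` norm `((1/2π) ∫ |φ|^p)^{1/p}`. -/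
def lpNormT (p : ℝ) (φ : ℝ → ℂ) : ℝ :=
  ((1 / (2 * π)) * ∫ t in (0:ℝ)..(2 * π), ‖φ t‖ ^ p) ^ (1 / p)

/-- Membership in the analytic Hardy space `H^p(𝔻)` for `p ∈ [1, ∞)`. -/
def MemHp (p : ℝ) (g : ℂ → ℂ) : Prop :=
  DifferentiableOn ℂ g (ball (0:ℂ) 1) ∧ ∃ M : ℝ, ∀ r ∈ Ioo (0:ℝ) 1, Mp p g r ≤ M

/-- Membership in `H^∞(𝔻)`: bounded analytic functions on the unit disk. -/
def MemHinf (g : ℂ → ℂ) : Prop :=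
  DifferentiableOn ℂ g (ball (0:ℂ) 1) ∧ ∃ M : ℝ, ∀ z ∈ ball (0:ℂ) 1, ‖g z‖ ≤ M

/-- Harmonicity on the unit disk: `f` is C² with vanishing Laplacian. -/
def HarmonicOnD (f : ℂ → ℂ) : Prop :=
  ContDiffOn ℝ 2 f (ball (0:ℂ) 1) ∧
  ∀ z ∈ ball (0:ℂ) 1,
    fderiv ℝ (fun w => fderiv ℝ f w 1) z 1
      + fderiv ℝ (fun w => fderiv ℝ f w Complex.I) z Complex.I = 0

/-- Membership in the harmonic Hardy space `h^p(𝔻)` for `p ∈ [1, ∞)`. -/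
def Memhp (p : ℝ) (g : ℂ → ℂ) : Prop :=
  HarmonicOnD g ∧ ∃ M : ℝ, ∀ r ∈ Ioo (0:ℝ) 1, Mp p g r ≤ M

/-- Membership in `h^∞(𝔻)`: bounded harmonic functions on the unit disk. -/
def Memhinf (g : ℂ → ℂ) : Prop :=
  HarmonicOnD g ∧ ∃ M : ℝ, ∀ z ∈ ball (0:ℂ) 1, ‖g z‖ ≤ M

/-- `L` is the value of the principal-value Hilbert transform
`(1/2π) p.v. ∫ φ(t)/tan((θ-t)/2) dt` of (the 2π-periodic) `φ` at `θ`. -/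
def IsPVHilbert (φ : ℝ → ℂ) (θ : ℝ) (L : ℂ) : Prop :=
  Filter.Tendsto
    (fun ε : ℝ => (1 / (2 * π)) *
      ∫ t in Ioo (θ - π) (θ + π) \ Ioo (θ - ε) (θ + ε),
        φ t / (Real.tan ((θ - t) / 2) : ℂ))
    (nhdsWithin 0 (Ioi 0)) (nhds L)

/-!
On the disk `f = P[F]` is the sum of an analytic and an antianalytic function, both given by
integrals against the Herglotz kernel `(1 + w) / (1 - w)`. Integrating by parts against the
absolutely continuous boundary function, `2 i z f_z` and `2 i z conj (f_z̄)` are the Herglotz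
integrals of `Ḟ` and of its conjugate.

The Herglotz integral of an integrable `φ` has radial limit `φ + i H(φ)` at every Lebesgue point of
`φ` where the principal value exists: the kernel differs from its truncation at angle `1 - r` by an
approximate identity. If the Herglotz integral is in `H¹`, Fatou's lemma makes this limit, hence
`H(φ)`, integrable. Conversely, a function with nonnegative real part is in the Smirnov class, so a
Herglotz integral, as a combination of such functions, is too; by Smirnov's theorem it is the
Poisson integral of its boundary values as soon as these are integrable, and Poisson integrals
contract `L¹`. The factor `z` costs nothing, since `f_z` is bounded on `|z| ≤ 1/2`.
-/

/-- The Herglotz kernel `(1 + w) / (1 - w)`, whose real part is the Poisson kernel. -/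
def herglotzKer (w : ℂ) : ℂ := (1 + w) / (1 - w)

/-- The Herglotz integral of a function `φ` of the angular variable: for real `φ` this is the
analytic function with real part the Poisson integral of `φ` and real value at `0`. -/
def herglotzInt (φ : ℝ → ℂ) (z : ℂ) : ℂ :=
  (1 / (2 * π)) * ∫ t in (0 : ℝ)..(2 * π), herglotzKer (z * exp (-(t : ℂ) * I)) * φ t

section HerglotzKernel

variable {w z : ℂ}

lemma one_sub_ne_zero_of_norm_lt_one (hw : ‖w‖ < 1) : 1 - w ≠ 0 := by
  rintro h
  simp [← sub_eq_zero.1 h] at hw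

lemma norm_mul_exp_neg_mul_I (z : ℂ) (t : ℝ) : ‖z * exp (-(t : ℂ) * I)‖ = ‖z‖ := by
  rw [norm_mul, ← ofReal_neg, norm_exp_ofReal_mul_I, mul_one]

lemma norm_herglotzKer_le (hw : ‖w‖ < 1) : ‖herglotzKer w‖ ≤ 2 / (1 - ‖w‖) := by
  have hnum : ‖1 + w‖ ≤ 2 := (norm_add_le _ _).trans (by rw [norm_one]; linarith)
  have hden : 1 - ‖w‖ ≤ ‖1 - w‖ := by simpa using norm_sub_norm_le (1 : ℂ) w
  have : 0 < 1 - ‖w‖ := by linarith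
  rw [herglotzKer, norm_div]
  gcongr

lemma re_herglotzKer (w : ℂ) : (herglotzKer w).re = poissonKer w := by
  rw [herglotzKer, poissonKer, div_re, ← normSq_eq_norm_sq, ← normSq_eq_norm_sq, ← add_div]
  congr 1
  simp only [add_re, one_re, sub_re, add_im, one_im, zero_add, sub_im, zero_sub, normSq_apply]
  ring

lemma poissonKer_nonneg (hw : ‖w‖ ≤ 1) : 0 ≤ poissonKer w :=
  div_nonneg (sub_nonneg.2 (pow_le_one₀ (norm_nonneg w) hw)) (by positivity)

lemma ofReal_poissonKer (w : ℂ) :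
    (poissonKer w : ℂ) = 1 / 2 * (herglotzKer w + (starRingEnd ℂ) (herglotzKer w)) := by
  rw [← re_herglotzKer, add_conj]
  push_cast
  ring

lemma hasDerivAt_herglotzKer (hw : ‖w‖ < 1) : HasDerivAt herglotzKer (2 / (1 - w) ^ 2) w := by
  refine (((hasDerivAt_id' w).const_add 1).div ((hasDerivAt_id' w).const_sub 1)
    (one_sub_ne_zero_of_norm_lt_one hw)).congr_deriv ?_
  ring

lemma differentiableOn_herglotzKer : DifferentiableOn ℂ herglotzKer (ball 0 1) := fun _ hw =>
  (hasDerivAt_herglotzKer (mem_ball_zero_iff.1 hw)).differentiableAt.differentiableWithinAt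

lemma hasDerivAt_herglotzKer_mul_exp (hz : ‖z‖ < 1) (t : ℝ) :
    HasDerivAt (fun t : ℝ => herglotzKer (z * exp (-(t : ℂ) * I)))
      (-(I * z) * (2 * exp (-(t : ℂ) * I) / (1 - z * exp (-(t : ℂ) * I)) ^ 2)) t := by
  have hexp : HasDerivAt (fun t : ℝ => z * exp (-(t : ℂ) * I))
      (z * (exp (-(t : ℂ) * I) * (-1 * I))) t :=
    (((hasDerivAt_id t).ofReal_comp.neg.mul_const I).cexp).const_mul z
  have hker := hasDerivAt_herglotzKer ((norm_mul_exp_neg_mul_I z t).trans_lt hz)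
  have hcomp := hker.comp t hexp
  exact hcomp.congr_deriv (by ring)

lemma continuous_herglotzKer_mul_exp (hz : ‖z‖ < 1) :
    Continuous fun t : ℝ => herglotzKer (z * exp (-(t : ℂ) * I)) :=
  continuous_iff_continuousAt.2 fun t => (hasDerivAt_herglotzKer_mul_exp hz t).continuousAt

lemma herglotzRieszKernel_exp_mul_I (z : ℂ) (t : ℝ) :
    herglotzRieszKernel 0 z (exp (t * I)) = herglotzKer (z * exp (-(t : ℂ) * I)) := by
  have hinv : exp (t * I) * exp (-(t : ℂ) * I) = 1 := by rw [← exp_add]; simp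
  rw [herglotzKer, ← mul_div_mul_left _ _ (exp_ne_zero (t * I)), herglotzRieszKernel_def]
  congr 1
  · linear_combination -z * hinv
  · linear_combination z * hinv

end HerglotzKernel

section CircleMeans

variable {G : ℂ → ℂ} {r : ℝ}

lemma norm_ofReal_mul_exp_mul_I (hr : 0 ≤ r) (t : ℝ) : ‖(r : ℂ) * exp (t * I)‖ = r := by
  rw [norm_mul, norm_exp_ofReal_mul_I, mul_one, norm_real, Real.norm_of_nonneg hr]

lemma ofReal_mul_exp_mul_I_mem_ball (hr : r ∈ Ioo (0 : ℝ) 1) (t : ℝ) :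
    (r : ℂ) * exp (t * I) ∈ ball (0 : ℂ) 1 := by
  rw [mem_ball_zero_iff, norm_ofReal_mul_exp_mul_I hr.1.le]
  exact hr.2

lemma continuous_circle_of_continuousOn (hG : ContinuousOn G (ball 0 1))
    (hr : r ∈ Ioo (0 : ℝ) 1) : Continuous fun t : ℝ => G (r * exp (t * I)) :=
  hG.comp_continuous (by fun_prop) (ofReal_mul_exp_mul_I_mem_ball hr)

lemma diffContOnCl_comp_ofReal_mul (hG : DifferentiableOn ℂ G (ball 0 1))
    (hr : r ∈ Ioo (0 : ℝ) 1) : DiffContOnCl ℂ (fun w => G (r * w)) (ball 0 1) := by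
  refine DifferentiableOn.diffContOnCl (hG.comp (by fun_prop) fun w hw => ?_)
  rw [closure_ball _ one_ne_zero, mem_closedBall_zero_iff] at hw
  rw [mem_ball_zero_iff, norm_mul, norm_real, Real.norm_of_nonneg hr.1.le]
  exact (mul_le_of_le_one_right hr.1.le hw).trans_lt hr.2

lemma apply_ofReal_mul_eq_poissonIntR (hG : DifferentiableOn ℂ G (ball 0 1))
    (hr : r ∈ Ioo (0 : ℝ) 1) {z : ℂ} (hz : ‖z‖ < 1) :
    G (r * z) = poissonIntR (fun t => G (r * exp (t * I))) z := by
  rw [← (diffContOnCl_comp_ofReal_mul hG hr).circleAverage_re_herglotzRieszKernel_smul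
    (mem_ball_zero_iff.2 hz), Real.circleAverage_def, poissonIntR]
  simp only [circleMap, zero_add, ofReal_one, one_mul, Function.comp_apply, Pi.smul_apply',
    herglotzRieszKernel_exp_mul_I, re_herglotzKer, real_smul]
  push_cast
  rw [one_div]

lemma integral_circle_of_differentiableOn (hG : DifferentiableOn ℂ G (ball 0 1))
    (hr : r ∈ Ioo (0 : ℝ) 1) :
    ∫ t in (0 : ℝ)..(2 * π), G (r * exp (t * I)) = 2 * π * G 0 := by
  have hmean := apply_ofReal_mul_eq_poissonIntR hG hr (z := 0) (by simp)
  simp only [poissonIntR, poissonKer, mul_zero, zero_mul, norm_zero, sub_zero, norm_one] at hmean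
  rw [hmean]
  simp [field]

lemma integral_poissonKer_mul_exp (hr : r ∈ Ioo (0 : ℝ) 1) (t : ℝ) :
    ∫ θ in (0 : ℝ)..(2 * π), poissonKer (r * exp (θ * I) * exp (-(t : ℂ) * I)) = 2 * π := by
  have hG : DifferentiableOn ℂ (fun w => herglotzKer (w * exp (-(t : ℂ) * I))) (ball 0 1) :=
    differentiableOn_herglotzKer.comp (by fun_prop) fun w hw => by
      simpa only [mem_ball_zero_iff, norm_mul_exp_neg_mul_I] using hw
  have hint := (continuous_circle_of_continuousOn hG.continuousOn hr).intervalIntegrable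
    (μ := volume) 0 (2 * π)
  have hre := reCLM.intervalIntegral_comp_comm hint
  rw [integral_circle_of_differentiableOn hG hr] at hre
  simp only [reCLM_apply, re_herglotzKer] at hre
  rw [hre]
  simp [herglotzKer]

end CircleMeans

section HerglotzIntegral

variable {φ ψ : ℝ → ℂ} {z : ℂ}

lemma intervalIntegrable_conj {a b : ℝ} (hφ : IntervalIntegrable φ volume a b) :
    IntervalIntegrable (fun t => (starRingEnd ℂ) (φ t)) volume a b := by
  rw [intervalIntegrable_iff] at hφ ⊢
  exact conjCLE.toContinuousLinearMap.integrable_comp hφ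

lemma intervalIntegrable_herglotzKer_mul (hφ : IntervalIntegrable φ volume 0 (2 * π))
    (hz : ‖z‖ < 1) :
    IntervalIntegrable (fun t => herglotzKer (z * exp (-(t : ℂ) * I)) * φ t) volume 0 (2 * π) :=
  hφ.continuousOn_mul (continuous_herglotzKer_mul_exp hz).continuousOn

lemma exists_comp_circleMap_eq (φ : ℝ → ℂ) :
    ∃ f : ℂ → ℂ, ∀ t ∈ uIoc 0 (2 * π), f (circleMap 0 1 t) = φ t := by
  have hinj : InjOn (circleMap 0 1) (uIoc 0 (2 * π)) :=
    injOn_circleMap_of_abs_sub_le one_ne_zero (by simp [abs_of_pos Real.pi_pos])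
  exact ⟨φ ∘ Function.invFunOn (circleMap 0 1) (uIoc 0 (2 * π)), fun t ht =>
    congr_arg φ (hinj.leftInvOn_invFunOn ht)⟩

lemma hasDerivAt_herglotzInt (hφ : IntervalIntegrable φ volume 0 (2 * π)) (hz : ‖z‖ < 1) :
    HasDerivAt (herglotzInt φ) ((1 / (2 * π)) * ∫ t in (0 : ℝ)..(2 * π),
      2 * exp (-(t : ℂ) * I) / (1 - z * exp (-(t : ℂ) * I)) ^ 2 * φ t) z := by
  obtain ⟨f, hf⟩ := exists_comp_circleMap_eq φ
  have hfint : CircleIntegrable f 0 1 := hφ.congr fun t ht => (hf t ht).symm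
  refine ((hasDerivAt_circleAverage_herglotzRieszKernel_smul hfint
    (mem_ball_zero_iff.2 hz)).congr_deriv ?_).congr_of_eventuallyEq (.of_forall fun w => ?_)
  · rw [Real.circleAverage_def, real_smul]
    push_cast
    rw [one_div]
    congr 1
    refine intervalIntegral.integral_congr_ae (.of_forall fun t ht => ?_)
    have hexp : exp (t * I) ≠ 0 := exp_ne_zero _
    rw [hf t ht, smul_eq_mul, neg_mul, exp_neg, circleMap_zero, ofReal_one, one_mul]
    congr 1
    have : 1 - z * (exp (t * I))⁻¹ = (exp (t * I) - z) / exp (t * I) := by field_simp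
    rw [this, div_pow]
    field_simp
  · simp only [Real.circleAverage_def, real_smul, herglotzInt]
    push_cast
    rw [one_div]
    congr 1
    refine intervalIntegral.integral_congr_ae (.of_forall fun t ht => ?_)
    rw [hf t ht, smul_eq_mul, circleMap_zero, ofReal_one, one_mul, herglotzRieszKernel_exp_mul_I]

lemma differentiableOn_herglotzInt (hφ : IntervalIntegrable φ volume 0 (2 * π)) :
    DifferentiableOn ℂ (herglotzInt φ) (ball 0 1) := fun _ hz =>
  (hasDerivAt_herglotzInt hφ (mem_ball_zero_iff.1 hz)).differentiableAt.differentiableWithinAt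

lemma herglotzInt_add (hφ : IntervalIntegrable φ volume 0 (2 * π))
    (hψ : IntervalIntegrable ψ volume 0 (2 * π)) (hz : ‖z‖ < 1) :
    herglotzInt (fun t => φ t + ψ t) z = herglotzInt φ z + herglotzInt ψ z := by
  simp only [herglotzInt, mul_add]
  rw [intervalIntegral.integral_add (intervalIntegrable_herglotzKer_mul hφ hz)
    (intervalIntegrable_herglotzKer_mul hψ hz), mul_add]

lemma herglotzInt_const_mul (c : ℂ) (φ : ℝ → ℂ) (z : ℂ) :
    herglotzInt (fun t => c * φ t) z = c * herglotzInt φ z := by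
  simp only [herglotzInt, mul_left_comm _ c, intervalIntegral.integral_const_mul]

lemma poissonIntR_eq_herglotzInt_add_conj (hφ : IntervalIntegrable φ volume 0 (2 * π))
    (hz : ‖z‖ < 1) :
    poissonIntR φ z = 1 / 2 * (herglotzInt φ z +
      (starRingEnd ℂ) (herglotzInt (fun t => (starRingEnd ℂ) (φ t)) z)) := by
  have hconj := intervalIntegrable_conj
    (intervalIntegrable_herglotzKer_mul (intervalIntegrable_conj hφ) hz)
  have hker : ∀ t : ℝ, (poissonKer (z * exp (-(t : ℂ) * I)) : ℂ) * φ t =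
      1 / 2 * (herglotzKer (z * exp (-(t : ℂ) * I)) * φ t +
        (starRingEnd ℂ) (herglotzKer (z * exp (-(t : ℂ) * I)) * (starRingEnd ℂ) (φ t))) := by
    intro t
    rw [ofReal_poissonKer, map_mul, conj_conj]
    ring
  simp only [poissonIntR, herglotzInt, hker]
  rw [intervalIntegral.integral_const_mul,
    intervalIntegral.integral_add (intervalIntegrable_herglotzKer_mul hφ hz) hconj,
    intervalIntegral.intervalIntegral_conj, map_mul]
  simp only [map_div₀, map_mul, map_one, conj_ofReal, map_ofNat]
  ring

lemma re_herglotzInt_ofReal_nonneg {u : ℝ → ℝ} (hu : IntervalIntegrable u volume 0 (2 * π))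
    (hu0 : ∀ t, 0 ≤ u t) (hz : ‖z‖ < 1) : 0 ≤ (herglotzInt (fun t => (u t : ℂ)) z).re := by
  have huC : IntervalIntegrable (fun t => (u t : ℂ)) volume 0 (2 * π) :=
    ⟨hu.1.ofReal, hu.2.ofReal⟩
  have hre := reCLM.intervalIntegral_comp_comm (intervalIntegrable_herglotzKer_mul huC hz)
  have hcoef : (1 / (2 * π) : ℂ) = ((1 / (2 * π) : ℝ) : ℂ) := by push_cast; rfl
  rw [herglotzInt, hcoef, re_ofReal_mul, ← reCLM_apply, ← hre]
  refine mul_nonneg (by positivity) (intervalIntegral.integral_nonneg (by positivity) fun t _ => ?_)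
  rw [reCLM_apply, re_mul_ofReal, re_herglotzKer]
  exact mul_nonneg (poissonKer_nonneg ((norm_mul_exp_neg_mul_I z t).trans_le hz.le)) (hu0 t)

end HerglotzIntegral

section Wirtinger

lemma conj_wdzb (f : ℂ → ℂ) (z : ℂ) :
    (starRingEnd ℂ) (wdzb f z) = wdz (fun w => (starRingEnd ℂ) (f w)) z := by
  have hfderiv : fderiv ℝ (fun w => (starRingEnd ℂ) (f w)) z =
      conjCLE.toContinuousLinearMap.comp (fderiv ℝ f z) := conjCLE.comp_fderiv
  simp [wdz, wdzb, hfderiv, conj_ofNat, sub_eq_add_neg]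

lemma wdz_add_conj {A B f : ℂ → ℂ} {a z : ℂ} (hA : HasDerivAt A a z)
    (hB : DifferentiableAt ℂ B z) (hf : f =ᶠ[𝓝 z] fun w => A w + (starRingEnd ℂ) (B w)) :
    wdz f z = a := by
  have hfderiv := (((hA.hasFDerivAt.restrictScalars ℝ).add
    (conjCLE.toContinuousLinearMap.hasFDerivAt.comp z
      (hB.hasDerivAt.hasFDerivAt.restrictScalars ℝ))).congr_of_eventuallyEq hf).fderiv
  have hx : fderiv ℝ f z 1 = a + (starRingEnd ℂ) (deriv B z) := by simp [hfderiv]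
  have hy : fderiv ℝ f z I = I * a - I * (starRingEnd ℂ) (deriv B z) := by
    simp [hfderiv, sub_eq_add_neg]
  rw [wdz, hx, hy]
  linear_combination ((starRingEnd ℂ) (deriv B z) / 2 - a / 2) * I_sq

lemma absolutelyContinuousOnInterval_primitive {E : Type*} [NormedAddCommGroup E] [NormedSpace ℝ E]
    {a b : ℝ} {φ : ℝ → E} (hφ : IntervalIntegrable φ volume a b) :
    AbsolutelyContinuousOnInterval (fun x => ∫ s in a..x, φ s) a b := by
  refine squeeze_zero' (.of_forall fun p => Finset.sum_nonneg fun i _ => dist_nonneg) ?_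
    (hφ.norm.absolutelyContinuousOnInterval_intervalIntegral left_mem_uIcc)
  filter_upwards [mem_inf_of_right (mem_principal_self _)] with p hp
  refine Finset.sum_le_sum fun i hi => ?_
  have hsub {x : ℝ} (hx : x ∈ uIcc a b) : IntervalIntegrable φ volume a x :=
    hφ.mono_set (uIcc_subset_uIcc_left hx)
  obtain ⟨hx, hy⟩ := hp.1 i hi
  rw [dist_eq_norm, dist_eq_norm, intervalIntegral.integral_interval_sub_left (hsub hx) (hsub hy),
    intervalIntegral.integral_interval_sub_left (hsub hx).norm (hsub hy).norm]
  exact intervalIntegral.norm_integral_le_abs_integral_norm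

lemma integral_eq_sub_of_ae_hasDerivAt {E : Type*} [NormedAddCommGroup E] [NormedSpace ℝ E]
    [CompleteSpace E] {a b : ℝ} {G g : ℝ → E}
    (hG : AbsolutelyContinuousOnInterval G a b) (hg : IntervalIntegrable g volume a b)
    (hGg : ∀ᵐ x, x ∈ uIcc a b → HasDerivAt G (g x) x) :
    ∫ x in a..b, g x = G b - G a := by
  have hdiff : ∀ᵐ x, x ∈ uIcc a b → HasDerivAt (G - fun x => ∫ s in a..x, g s) 0 x := by
    filter_upwards [hGg, hg.ae_hasDerivAt_integral] with x hx hx' hmem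
    simpa using (hx hmem).sub (hx' hmem a left_mem_uIcc)
  obtain ⟨C, hC⟩ := (hG.sub
    (absolutelyContinuousOnInterval_primitive hg)).const_of_ae_hasDerivAt_zero hdiff
  have hCa : G a = C := by simpa using hC a left_mem_uIcc
  have hCb : G b - ∫ s in a..b, g s = C := hC b right_mem_uIcc
  rw [eq_sub_iff_add_eq', hCa, ← hCb, sub_add_cancel]

lemma I_mul_mul_deriv_herglotzInt {φ Φ : ℝ → ℂ} {c z : ℂ}
    (hφ : IntervalIntegrable φ volume 0 (2 * π)) (hφ0 : ∫ t in (0 : ℝ)..(2 * π), φ t = 0)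
    (hΦ : ∀ t, Φ t = c + ∫ s in (0 : ℝ)..t, φ s) (hz : ‖z‖ < 1) :
    I * z * deriv (herglotzInt Φ) z = herglotzInt φ z := by
  set k : ℝ → ℂ := fun t => herglotzKer (z * exp (-(t : ℂ) * I))
  set k' : ℝ → ℂ := fun t => 2 * exp (-(t : ℂ) * I) / (1 - z * exp (-(t : ℂ) * I)) ^ 2
  have hk (t : ℝ) : HasDerivAt k (-(I * z) * k' t) t := hasDerivAt_herglotzKer_mul_exp hz t
  have hk' : Continuous k' := Continuous.div (by fun_prop) (by fun_prop) fun t =>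
    pow_ne_zero 2 (one_sub_ne_zero_of_norm_lt_one ((norm_mul_exp_neg_mul_I z t).trans_lt hz))
  have hkAC : AbsolutelyContinuousOnInterval k 0 (2 * π) := by
    refine ContDiffOn.absolutelyContinuousOnInterval (ContDiff.contDiffOn ?_)
    refine contDiff_one_iff_deriv.2 ⟨fun t => (hk t).differentiableAt, ?_⟩
    rw [funext fun t => (hk t).deriv]
    fun_prop
  have hΦAC : AbsolutelyContinuousOnInterval Φ 0 (2 * π) := by
    rw [funext hΦ]
    exact contDiffOn_const.absolutelyContinuousOnInterval.fun_add
      (absolutelyContinuousOnInterval_primitive hφ)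
  have hkφ := intervalIntegrable_herglotzKer_mul hφ hz
  have hk'Φ : IntervalIntegrable (fun t => k' t * Φ t) volume 0 (2 * π) :=
    (hk'.continuousOn.mul hΦAC.continuousOn).intervalIntegrable
  have hderiv : ∀ᵐ t, t ∈ uIcc 0 (2 * π) →
      HasDerivAt (k • Φ) (-(I * z) * (k' t * Φ t) + k t * φ t) t := by
    filter_upwards [hφ.ae_hasDerivAt_integral] with t ht hmem
    have hΦt : HasDerivAt Φ (φ t) t := by
      rw [funext hΦ]
      exact (ht hmem 0 left_mem_uIcc).const_add c
    exact ((hk t).mul hΦt).congr_deriv (by ring)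
  have hftc := integral_eq_sub_of_ae_hasDerivAt (hkAC.smul hΦAC) ((hk'Φ.const_mul _).add hkφ) hderiv
  have hperiod : k (2 * π) = k 0 := by simp [k, exp_neg]
  have hzero : (k • Φ) (2 * π) - (k • Φ) 0 = 0 := by
    simp [hperiod, hΦ, hφ0]
  rw [intervalIntegral.integral_add (hk'Φ.const_mul _) hkφ, intervalIntegral.integral_const_mul,
    hzero] at hftc
  rw [(hasDerivAt_herglotzInt hΦAC.continuousOn.intervalIntegrable hz).deriv, herglotzInt]
  linear_combination (-(1 / (2 * π) : ℂ)) * hftc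

lemma IsACDeriv.conj {F : ℂ → ℂ} {Fd : ℝ → ℂ} (hF : IsACDeriv F Fd) :
    IsACDeriv (fun w => (starRingEnd ℂ) (F w)) fun t => (starRingEnd ℂ) (Fd t) := by
  obtain ⟨hint, hper, hprim⟩ := hF
  refine ⟨fun a b => intervalIntegrable_conj (hint a b), hper.comp _, fun t => ?_⟩
  simp only [hprim, map_add, intervalIntegral.intervalIntegral_conj]

lemma IsACDeriv.intervalIntegrable_circle {F : ℂ → ℂ} {Fd : ℝ → ℂ} (hF : IsACDeriv F Fd) :
    IntervalIntegrable (fun t : ℝ => F (exp (t * I))) volume 0 (2 * π) := by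
  simp only [hF.2.2]
  exact (continuous_const.add
    (intervalIntegral.continuous_primitive hF.1 0)).intervalIntegrable _ _

lemma IsACDeriv.locallyIntegrable {F : ℂ → ℂ} {Fd : ℝ → ℂ} (hF : IsACDeriv F Fd) :
    LocallyIntegrable Fd := fun x =>
  ⟨Ioc (x - 1) (x + 1), Ioc_mem_nhds (by linarith) (by linarith), (hF.1 (x - 1) (x + 1)).1⟩

lemma poissonInt_conj (F : ℂ → ℂ) :
    poissonInt (fun w => (starRingEnd ℂ) (F w)) = fun z => (starRingEnd ℂ) (poissonInt F z) := by
  ext z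
  simp only [poissonInt, map_mul, map_div₀, map_one, map_ofNat, conj_ofReal,
    ← intervalIntegral.intervalIntegral_conj]

lemma conj_wdzb_poissonInt (F : ℂ → ℂ) (z : ℂ) :
    (starRingEnd ℂ) (wdzb (poissonInt F) z) =
      wdz (poissonInt fun w => (starRingEnd ℂ) (F w)) z := by
  rw [conj_wdzb, poissonInt_conj]

lemma wdz_poissonInt {F : ℂ → ℂ}
    (hF : IntervalIntegrable (fun t : ℝ => F (exp (t * I))) volume 0 (2 * π)) {z : ℂ}
    (hz : ‖z‖ < 1) :
    wdz (poissonInt F) z = 1 / 2 * deriv (herglotzInt fun t => F (exp (t * I))) z := by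
  have hdecomp : poissonInt F =ᶠ[𝓝 z] fun w =>
      1 / 2 * herglotzInt (fun t => F (exp (t * I))) w + (starRingEnd ℂ)
        (1 / 2 * herglotzInt (fun t => (starRingEnd ℂ) (F (exp (t * I)))) w) := by
    filter_upwards [isOpen_ball.mem_nhds (mem_ball_zero_iff.2 hz)] with w hw
    refine (poissonIntR_eq_herglotzInt_add_conj hF (mem_ball_zero_iff.1 hw)).trans ?_
    simp only [map_mul, map_div₀, map_one, map_ofNat]
    ring
  have hA := (hasDerivAt_herglotzInt hF hz).differentiableAt.hasDerivAt
  have hB := (hasDerivAt_herglotzInt (intervalIntegrable_conj hF) hz).differentiableAt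
  exact wdz_add_conj (hA.const_mul (1 / 2)) (hB.const_mul (1 / 2)) hdecomp

lemma differentiableOn_wdz_poissonInt {F : ℂ → ℂ}
    (hF : IntervalIntegrable (fun t : ℝ => F (exp (t * I))) volume 0 (2 * π)) :
    DifferentiableOn ℂ (wdz (poissonInt F)) (ball 0 1) :=
  (((differentiableOn_herglotzInt hF).deriv isOpen_ball).const_mul (1 / 2)).congr
    fun _ hz => wdz_poissonInt hF (mem_ball_zero_iff.1 hz)

lemma two_I_mul_wdz_poissonInt {F : ℂ → ℂ} {Fd : ℝ → ℂ} (hF : IsACDeriv F Fd) {z : ℂ}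
    (hz : ‖z‖ < 1) : 2 * I * z * wdz (poissonInt F) z = herglotzInt Fd z := by
  have hmean : ∫ t in (0 : ℝ)..(2 * π), Fd t = 0 := by
    simpa using (hF.2.2 (2 * π)).symm
  rw [wdz_poissonInt hF.intervalIntegrable_circle hz,
    ← I_mul_mul_deriv_herglotzInt (hF.1 _ _) hmean hF.2.2 hz]
  ring

end Wirtinger

section ApproximateIdentity

variable {ψ : ℝ → ℝ}

lemma hasDerivAt_neg_inv_one_add_sq (y : ℝ) :
    HasDerivAt (fun y : ℝ => -(1 + y ^ 2)⁻¹) (2 * y / (1 + y ^ 2) ^ 2) y := by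
  have hsq : HasDerivAt (fun y : ℝ => 1 + y ^ 2) (2 * y) y := by
    simpa using (hasDerivAt_pow 2 y).const_add 1
  exact (hsq.inv (by positivity)).neg.congr_deriv (by ring)

lemma tendsto_neg_inv_one_add_sq_atTop :
    Tendsto (fun y : ℝ => -(1 + y ^ 2)⁻¹) atTop (𝓝 0) := by
  have hsq : Tendsto (fun y : ℝ => 1 + y ^ 2) atTop atTop :=
    tendsto_atTop_add_const_left _ _ (tendsto_pow_atTop two_ne_zero)
  simpa using hsq.inv_tendsto_atTop.neg

lemma integrableOn_Ioi_two_mul_div_one_add_sq_sq :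
    IntegrableOn (fun y : ℝ => 2 * y / (1 + y ^ 2) ^ 2) (Ioi 0) :=
  integrableOn_Ioi_deriv_of_nonneg
    (hasDerivAt_neg_inv_one_add_sq 0).continuousAt.continuousWithinAt
    (fun y _ => hasDerivAt_neg_inv_one_add_sq y)
    (fun y (hy : 0 < y) => by positivity) tendsto_neg_inv_one_add_sq_atTop

lemma integral_Ioi_two_mul_div_one_add_sq_sq {a : ℝ} (ha : 0 ≤ a) :
    ∫ y in Ioi a, 2 * y / (1 + y ^ 2) ^ 2 = (1 + a ^ 2)⁻¹ := by
  rw [integral_Ioi_of_hasDerivAt_of_nonneg' (fun y _ => hasDerivAt_neg_inv_one_add_sq y)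
    (fun y hy => by have := ha.trans_lt hy; positivity) tendsto_neg_inv_one_add_sq_atTop]
  simp

/- The Cauchy kernel `δ / (δ ^ 2 + s ^ 2)` is a superposition of normalised indicator functions of
the intervals `|s| < δ * y`, so integrating against it averages the means over these intervals. -/
lemma integral_cauchyKernel_mul_eq_integral_mean (hψ : Integrable ψ) {δ : ℝ} (hδ : 0 < δ) :
    ∫ s, δ / (δ ^ 2 + s ^ 2) * ψ s = ∫ y in Ioi (0 : ℝ),
      2 * y ^ 2 / (1 + y ^ 2) ^ 2 * ((∫ s in Ioo (-(δ * y)) (δ * y), ψ s) / (δ * y)) := by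
  let m : ℝ → ℝ := fun y => 2 * y / (1 + y ^ 2) ^ 2
  let cone : Set (ℝ × ℝ) := {p | |p.1| < δ * p.2}
  have hcone : MeasurableSet cone :=
    measurableSet_lt measurable_fst.abs (measurable_snd.const_mul δ)
  have hprod : Integrable (fun p : ℝ × ℝ => ψ p.1 * m p.2)
      (volume.prod (volume.restrict (Ioi (0 : ℝ)))) :=
    hψ.mul_prod integrableOn_Ioi_two_mul_div_one_add_sq_sq
  have hswap := integral_integral_swap
    (f := fun s y => cone.indicator (fun p => ψ p.1 * m p.2) (s, y)) (hprod.indicator hcone)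
  have hleft : ∀ s, ∫ y in Ioi (0 : ℝ), cone.indicator (fun p => ψ p.1 * m p.2) (s, y) =
      δ * (δ / (δ ^ 2 + s ^ 2) * ψ s) := fun s => by
    have hslice : (fun y => cone.indicator (fun p => ψ p.1 * m p.2) (s, y)) =
        (Ioi (|s| / δ)).indicator fun y => ψ s * m y := by
      ext y
      simp only [cone, indicator, mem_ofPred_eq, mem_Ioi, div_lt_iff₀' hδ]
    have hs : 0 ≤ |s| / δ := by positivity
    rw [hslice, setIntegral_indicator measurableSet_Ioi, inter_eq_right.2 (Ioi_subset_Ioi hs),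
      integral_const_mul, integral_Ioi_two_mul_div_one_add_sq_sq hs, div_pow, sq_abs]
    field_simp
  have hright : ∀ y ∈ Ioi (0 : ℝ), ∫ s, cone.indicator (fun p => ψ p.1 * m p.2) (s, y) =
      δ * (2 * y ^ 2 / (1 + y ^ 2) ^ 2 *
        ((∫ s in Ioo (-(δ * y)) (δ * y), ψ s) / (δ * y))) := fun y (hy : 0 < y) => by
    have hslice : (fun s => cone.indicator (fun p => ψ p.1 * m p.2) (s, y)) =
        (Ioo (-(δ * y)) (δ * y)).indicator fun s => ψ s * m y := by
      ext s
      simp only [cone, indicator, mem_ofPred_eq, mem_Ioo, abs_lt]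
    rw [hslice, integral_indicator measurableSet_Ioo, integral_mul_const]
    simp only [m]
    field_simp
  rw [setIntegral_congr_fun measurableSet_Ioi hright, integral_const_mul] at hswap
  simp_rw [hleft, integral_const_mul] at hswap
  exact mul_left_cancel₀ hδ.ne' hswap

lemma measurable_mean (hψ0 : ∀ s, 0 ≤ ψ s) (hψ : Integrable ψ) :
    Measurable fun h : ℝ => (∫ s in Ioo (-h) h, ψ s) / h := by
  have hmono : Monotone fun h => ∫ s in Ioo (-h) h, ψ s := fun a b hab =>
    setIntegral_mono_set hψ.integrableOn (.of_forall hψ0)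
      (Ioo_subset_Ioo (neg_le_neg hab) hab).eventuallyLE
  exact hmono.measurable.div measurable_id

lemma exists_mean_le (hψ0 : ∀ s, 0 ≤ ψ s) (hψ : Integrable ψ)
    (hmean : Tendsto (fun h => (∫ s in Ioo (-h) h, ψ s) / h) (𝓝[>] 0) (𝓝 0)) :
    ∃ M, ∀ h, 0 < h → (∫ s in Ioo (-h) h, ψ s) / h ≤ M := by
  obtain ⟨a, ha, hlt⟩ :=
    mem_nhdsGT_iff_exists_Ioo_subset.1 (hmean.eventually_lt_const zero_lt_one)
  refine ⟨max 1 ((∫ s, ψ s) / a), fun h hh => ?_⟩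
  rcases lt_or_ge h a with hha | hah
  · exact le_max_of_le_left (le_of_lt (hlt ⟨hh, hha⟩))
  · exact le_max_of_le_right (div_le_div₀ (integral_nonneg hψ0)
      (setIntegral_le_integral hψ (.of_forall hψ0)) ha hah)

lemma tendsto_integral_cauchyKernel_mul (hψ0 : ∀ s, 0 ≤ ψ s) (hψ : Integrable ψ)
    (hmean : Tendsto (fun h => (∫ s in Ioo (-h) h, ψ s) / h) (𝓝[>] 0) (𝓝 0)) :
    Tendsto (fun δ => ∫ s, δ / (δ ^ 2 + s ^ 2) * ψ s) (𝓝[>] 0) (𝓝 0) := by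
  obtain ⟨M, hM⟩ := exists_mean_le hψ0 hψ hmean
  suffices hlim : Tendsto (fun δ => ∫ y in Ioi (0 : ℝ), 2 * y ^ 2 / (1 + y ^ 2) ^ 2 *
      ((∫ s in Ioo (-(δ * y)) (δ * y), ψ s) / (δ * y))) (𝓝[>] 0)
      (𝓝 (∫ _ in Ioi (0 : ℝ), (0 : ℝ))) by
    rw [integral_zero] at hlim
    refine hlim.congr' ?_
    filter_upwards [self_mem_nhdsWithin] with δ hδ
    exact (integral_cauchyKernel_mul_eq_integral_mean hψ hδ).symm
  refine tendsto_integral_filter_of_dominated_convergence (fun y => 2 * (1 + y ^ 2)⁻¹ * M)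
    (.of_forall fun δ => ?_) ?_ ?_ ?_
  · refine Measurable.aestronglyMeasurable (.mul (by fun_prop) ?_)
    exact (measurable_mean hψ0 hψ).comp (measurable_const_mul δ)
  · filter_upwards [self_mem_nhdsWithin] with δ hδ
    filter_upwards [ae_restrict_mem measurableSet_Ioi] with y hy
    have hδy : 0 < δ * y := mul_pos hδ hy
    have hmean0 : 0 ≤ (∫ s in Ioo (-(δ * y)) (δ * y), ψ s) / (δ * y) :=
      div_nonneg (integral_nonneg hψ0) hδy.le
    have hweight : 2 * y ^ 2 / (1 + y ^ 2) ^ 2 ≤ 2 * (1 + y ^ 2)⁻¹ := by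
      rw [← div_eq_mul_inv, div_le_div_iff₀ (by positivity) (by positivity)]
      nlinarith [sq_nonneg y]
    rw [Real.norm_of_nonneg (by positivity)]
    exact mul_le_mul hweight (hM _ hδy) hmean0 (by positivity)
  · exact ((integrable_inv_one_add_sq.const_mul _).mul_const _).integrableOn
  · filter_upwards [ae_restrict_mem measurableSet_Ioi] with y hy
    have hscale : Tendsto (fun δ : ℝ => δ * y) (𝓝[>] 0) (𝓝[>] 0) := by
      refine tendsto_nhdsWithin_iff.2 ⟨?_, ?_⟩
      · exact (Continuous.tendsto' (by fun_prop) 0 0 (zero_mul y)).mono_left nhdsWithin_le_nhds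
      · filter_upwards [self_mem_nhdsWithin] with δ hδ using mul_pos hδ (mem_Ioi.1 hy)
    simpa using (hmean.comp hscale).const_mul (2 * y ^ 2 / (1 + y ^ 2) ^ 2)

variable {E : Type*} [NormedAddCommGroup E]

lemma setIntegral_comp_sub_left [NormedSpace ℝ E] (f : ℝ → E) (θ : ℝ) (S : Set ℝ) :
    ∫ s in (fun s => θ - s) ⁻¹' S, f (θ - s) = ∫ t in S, f t :=
  (Measure.measurePreserving_sub_left volume θ).setIntegral_preimage_emb
    (MeasurableEquiv.subLeft θ).measurableEmbedding f S

lemma ae_tendsto_mean_norm_comp_sub_left_sub {φ : ℝ → E} (hφ : LocallyIntegrable φ) :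
    ∀ᵐ θ, Tendsto (fun h => (∫ s in Ioo (-h) h, ‖φ (θ - s) - φ θ‖) / h) (𝓝[>] 0) (𝓝 0) := by
  filter_upwards [IsUnifLocDoublingMeasure.ae_tendsto_average_norm_sub volume hφ 1] with θ hθ
  have hcenter : ∀ᶠ h in 𝓝[>] (0 : ℝ), θ ∈ closedBall θ (1 * h) := by
    filter_upwards [self_mem_nhdsWithin] with h hh
    simpa using le_of_lt hh
  have havg := (hθ (fun _ => θ) _ tendsto_id hcenter).const_mul 2
  rw [mul_zero] at havg
  refine havg.congr' ?_
  filter_upwards [self_mem_nhdsWithin] with h hh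
  have hh : 0 < h := hh
  have hshift : ∫ s in Ioo (-h) h, ‖φ (θ - s) - φ θ‖ = ∫ y in Icc (θ - h) (θ + h), ‖φ y - φ θ‖ := by
    rw [integral_Icc_eq_integral_Ioo,
      ← setIntegral_comp_sub_left (fun y => ‖φ y - φ θ‖) θ (Ioo (θ - h) (θ + h)),
      preimage_const_sub_Ioo, sub_add_cancel_left, sub_sub_cancel]
  rw [id_eq, setAverage_eq, measureReal_def, Real.volume_closedBall,
    ENNReal.toReal_ofReal (by positivity), smul_eq_mul, Real.closedBall_eq_Icc, hshift]
  field_simp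

lemma norm_setIntegral_smul_sub_smul_le [NormedSpace ℂ E] [CompleteSpace E]
    {S : Set ℝ} (hS : MeasurableSet S) (hS' : volume S ≠ ⊤) {k : ℝ → ℂ} {δ C : ℝ} (hδ : 0 < δ)
    (hk : AEStronglyMeasurable k (volume.restrict S))
    (hkC : ∀ s ∈ S, ‖k s‖ ≤ C * (δ / (δ ^ 2 + s ^ 2)))
    {f : ℝ → E} (hf : IntegrableOn f S) (a : E) :
    ‖(∫ s in S, k s • f s) - (∫ s in S, k s) • a‖ ≤
      C * ∫ s, δ / (δ ^ 2 + s ^ 2) * S.indicator (fun s => ‖f s - a‖) s := by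
  have ha : IntegrableOn (fun _ => a) S := integrableOn_const hS'
  have hcauchy_le : ∀ s, ‖δ / (δ ^ 2 + s ^ 2)‖ ≤ 1 / δ := fun s => by
    rw [Real.norm_of_nonneg (by positivity), div_le_div_iff₀ (by positivity) hδ]
    nlinarith [sq_nonneg s]
  have hk_le : ∀ᵐ s ∂volume.restrict S, ‖k s‖ ≤ |C| * (1 / δ) := by
    filter_upwards [ae_restrict_mem hS] with s hs
    exact (hkC s hs).trans ((le_abs_self _).trans (by rw [abs_mul]; gcongr; exact hcauchy_le s))
  have hk_smul : ∀ {g : ℝ → E}, IntegrableOn g S → IntegrableOn (fun s => k s • g s) S :=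
    fun hg => hg.bdd_smul _ hk hk_le
  have hcauchy : IntegrableOn (fun s => C * (δ / (δ ^ 2 + s ^ 2) * ‖f s - a‖)) S :=
    ((hf.sub ha).norm.bdd_mul (Measurable.aestronglyMeasurable (by fun_prop))
      (.of_forall hcauchy_le)).const_mul C
  calc ‖(∫ s in S, k s • f s) - (∫ s in S, k s) • a‖ = ‖∫ s in S, k s • (f s - a)‖ := by
        simp only [smul_sub]
        rw [integral_sub (hk_smul hf) (hk_smul ha), integral_smul_const]
    _ ≤ ∫ s in S, C * (δ / (δ ^ 2 + s ^ 2) * ‖f s - a‖) := by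
        refine norm_integral_le_of_norm_le hcauchy ?_
        filter_upwards [ae_restrict_mem hS] with s hs
        rw [norm_smul, ← mul_assoc]
        exact mul_le_mul_of_nonneg_right (hkC s hs) (norm_nonneg _)
    _ = C * ∫ s, δ / (δ ^ 2 + s ^ 2) * S.indicator (fun s => ‖f s - a‖) s := by
        rw [integral_const_mul, ← integral_indicator hS]
        simp only [indicator_mul_right]

lemma tendsto_setIntegral_smul_of_tendsto_mean [NormedSpace ℂ E] [CompleteSpace E]
    {ι : Type*} {l : Filter ι} {S : Set ℝ} (hS : MeasurableSet S) (hS' : volume S ≠ ⊤)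
    {K : ι → ℝ → ℂ} {δ : ι → ℝ} {C : ℝ} {c : ℂ} {f : ℝ → E} {a : E}
    (hδ : Tendsto δ l (𝓝[>] 0))
    (hK : ∀ i, AEStronglyMeasurable (K i) (volume.restrict S))
    (hKC : ∀ᶠ i in l, ∀ s ∈ S, ‖K i s‖ ≤ C * (δ i / (δ i ^ 2 + s ^ 2)))
    (hKc : ∀ᶠ i in l, ∫ s in S, K i s = c) (hf : IntegrableOn f S)
    (hmean : Tendsto (fun h => (∫ s in Ioo (-h) h ∩ S, ‖f s - a‖) / h) (𝓝[>] 0) (𝓝 0)) :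
    Tendsto (fun i => ∫ s in S, K i s • f s) l (𝓝 (c • a)) := by
  simp only [← setIntegral_indicator hS] at hmean
  have hlim := ((tendsto_integral_cauchyKernel_mul (indicator_nonneg fun _ _ => norm_nonneg _)
    ((integrable_indicator_iff hS).2 (hf.sub (integrableOn_const hS')).norm) hmean).comp
    hδ).const_mul C
  rw [mul_zero] at hlim
  refine tendsto_iff_norm_sub_tendsto_zero.2
    (squeeze_zero' (.of_forall fun _ => norm_nonneg _) ?_ hlim)
  filter_upwards [hKC, hKc, (tendsto_nhdsWithin_iff.1 hδ).2] with i hKCi hKci hδi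
  rw [← hKci]
  exact norm_setIntegral_smul_sub_smul_le hS hS' hδi (hK i) hKCi hf a

end ApproximateIdentity

/-- The kernel `herglotzKer (r * exp (s * I))` minus the boundary kernel truncated at the scale
`1 - r` of the principal value: its convolution with `φ` is the difference between the Herglotz
integral of `φ` and `I` times its truncated Hilbert transform. -/
def truncHerglotzKer (r s : ℝ) : ℂ :=
  herglotzKer (r * exp (s * I)) -
    {s : ℝ | 1 - r ≤ |s|}.indicator (fun s => herglotzKer (exp (s * I))) s

section RadialLimits

variable {r s θ : ℝ} {φ : ℝ → ℂ}

lemma two_div_pi_mul_abs_le_norm_one_sub_exp (hs : |s| ≤ π) :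
    2 / π * |s| ≤ ‖1 - exp (s * I)‖ := by
  have hs2 : |s / 2| ≤ π / 2 := by rw [abs_div, abs_two]; linarith
  rw [norm_sub_rev, mul_comm (s : ℂ), norm_exp_I_mul_ofReal_sub_one, Real.norm_eq_abs, abs_mul,
    abs_two]
  calc 2 / π * |s| = 2 * (2 / π * |s / 2|) := by rw [abs_div, abs_two]; ring
    _ ≤ 2 * |Real.sin (s / 2)| := by gcongr; exact Real.mul_abs_le_abs_sin hs2

lemma herglotzKer_exp_mul_I (s : ℝ) : herglotzKer (exp (s * I)) = I / (Real.tan (s / 2) : ℂ) := by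
  set b := exp ((s / 2 : ℂ) * I) with hb
  set b' := exp (-(s / 2 : ℂ) * I) with hb'
  have hb'b : b' * b = 1 := by
    rw [hb, hb', neg_mul, exp_neg, inv_mul_cancel₀ (exp_ne_zero _)]
  have hsq : exp (s * I) = b * b := by rw [hb, ← exp_add]; congr 1; ring
  have hnum : 1 + exp (s * I) = 2 * cos (s / 2) * b := by
    rw [two_cos, hsq]
    linear_combination -hb'b
  have hden : 1 - exp (s * I) = 2 * sin (s / 2) * -I * b := by
    rw [two_sin, hsq]
    linear_combination -hb'b + (b' * b - b ^ 2) * I_sq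
  rw [herglotzKer, hnum, hden, ofReal_tan, tan_eq_sin_div_cos,
    mul_div_mul_right _ _ (exp_ne_zero _)]
  push_cast
  simp only [div_eq_mul_inv, mul_inv, inv_inv, inv_neg, inv_I, neg_neg]
  ring

lemma herglotzKer_exp_neg (s : ℝ) :
    herglotzKer (exp ((-s : ℝ) * I)) = -herglotzKer (exp (s * I)) := by
  rw [herglotzKer_exp_mul_I, herglotzKer_exp_mul_I, neg_div, Real.tan_neg, ofReal_neg, div_neg]

lemma measurable_herglotzKer : Measurable herglotzKer := by
  unfold herglotzKer
  fun_prop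

lemma measurable_truncHerglotzKer (r : ℝ) : Measurable (truncHerglotzKer r) :=
  (measurable_herglotzKer.comp (by fun_prop)).sub
    ((measurable_herglotzKer.comp (by fun_prop)).indicator
      (measurableSet_le measurable_const measurable_id.abs))

lemma norm_herglotzKer_sub_le {b : ℂ} (hb : ‖b‖ = 1) (hb1 : b ≠ 1) (hr : r ∈ Ioo (0 : ℝ) 1) :
    ‖herglotzKer (r * b) - herglotzKer b‖ ≤ 4 * (1 - r) / ‖1 - b‖ ^ 2 := by
  have hr' : 0 < 1 - r := sub_pos.2 hr.2
  have hrb : ‖(r : ℂ) * b‖ = r := by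
    rw [norm_mul, hb, mul_one, norm_real, Real.norm_of_nonneg hr.1.le]
  have hb0 : 1 - b ≠ 0 := sub_ne_zero.2 hb1.symm
  have hrb0 : 1 - (r : ℂ) * b ≠ 0 := one_sub_ne_zero_of_norm_lt_one (hrb.trans_lt hr.2)
  have hfar : ‖1 - b‖ ≤ 2 * ‖1 - r * b‖ := by
    have hradial : 1 - r ≤ ‖1 - r * b‖ := by
      simpa only [hrb, norm_one] using norm_sub_norm_le (1 : ℂ) (r * b)
    have hstep : ‖((1 - r : ℝ) : ℂ) * b‖ = 1 - r := by
      rw [norm_mul, hb, mul_one, norm_real, Real.norm_of_nonneg hr'.le]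
    calc ‖1 - b‖ = ‖(1 - r * b) - ((1 - r : ℝ) : ℂ) * b‖ := by push_cast; ring_nf
      _ ≤ ‖1 - r * b‖ + ‖((1 - r : ℝ) : ℂ) * b‖ := norm_sub_le _ _
      _ ≤ 2 * ‖1 - r * b‖ := by rw [hstep]; linarith
  have hdiff : herglotzKer (r * b) - herglotzKer b =
      -(2 * ((1 - r : ℝ) : ℂ) * b) / ((1 - r * b) * (1 - b)) := by
    unfold herglotzKer
    field_simp
    push_cast
    ring
  have : 0 < ‖1 - b‖ := norm_pos_iff.2 hb0
  rw [hdiff, norm_div, norm_neg, norm_mul, norm_mul, norm_mul, hb, norm_ofNat, norm_real,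
    Real.norm_of_nonneg hr'.le, mul_one]
  calc 2 * (1 - r) / (‖1 - r * b‖ * ‖1 - b‖) ≤ 2 * (1 - r) / (‖1 - b‖ / 2 * ‖1 - b‖) := by
        gcongr; linarith
    _ = 4 * (1 - r) / ‖1 - b‖ ^ 2 := by field_simp; ring

lemma norm_truncHerglotzKer_le (hr : r ∈ Ioo (0 : ℝ) 1) (hs : |s| ≤ π) :
    ‖truncHerglotzKer r s‖ ≤ 2 * π ^ 2 * ((1 - r) / ((1 - r) ^ 2 + s ^ 2)) := by
  have hr' : 0 < 1 - r := sub_pos.2 hr.2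
  rw [truncHerglotzKer, ← sq_abs s, ← mul_div_assoc]
  rcases le_or_gt (1 - r) |s| with hfar | hnear
  · have hs0 : 0 < |s| := hr'.trans_le hfar
    have hchord := two_div_pi_mul_abs_le_norm_one_sub_exp hs
    have hchord0 : 0 < 2 / π * |s| := by positivity
    have hne : exp (s * I) ≠ 1 := fun h => by simp [h] at hchord; linarith
    have hmem : s ∈ {s : ℝ | 1 - r ≤ |s|} := hfar
    rw [indicator_of_mem hmem]
    calc ‖herglotzKer (r * exp (s * I)) - herglotzKer (exp (s * I))‖
        ≤ 4 * (1 - r) / ‖1 - exp (s * I)‖ ^ 2 :=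
          norm_herglotzKer_sub_le (norm_exp_ofReal_mul_I s) hne hr
      _ ≤ 4 * (1 - r) / (2 / π * |s|) ^ 2 := by gcongr
      _ = 2 * π ^ 2 * (1 - r) / (|s| ^ 2 + |s| ^ 2) := by field_simp; ring
      _ ≤ 2 * π ^ 2 * (1 - r) / ((1 - r) ^ 2 + |s| ^ 2) := by gcongr
  · have hnorm := norm_ofReal_mul_exp_mul_I hr.1.le s
    have hker := norm_herglotzKer_le (hnorm.trans_lt hr.2)
    rw [hnorm] at hker
    have hmem : s ∉ {s : ℝ | 1 - r ≤ |s|} := hnear.not_ge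
    rw [indicator_of_notMem hmem, sub_zero]
    calc ‖herglotzKer (r * exp (s * I))‖ ≤ 2 / (1 - r) := hker
      _ = 4 * (1 - r) / ((1 - r) ^ 2 + (1 - r) ^ 2) := by field_simp; ring
      _ ≤ 2 * π ^ 2 * (1 - r) / ((1 - r) ^ 2 + |s| ^ 2) := by
        gcongr
        nlinarith [Real.pi_gt_three]

lemma intervalIntegral_eq_setIntegral_of_periodic {f : ℝ → ℂ} (hf : Function.Periodic f (2 * π))
    (a : ℝ) : ∫ t in a..a + 2 * π, f t = ∫ t in Ioo (-π) π, f t := by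
  rw [hf.intervalIntegral_add_eq a (-π), show -π + 2 * π = π by ring,
    intervalIntegral.integral_of_le (by linarith [Real.pi_pos]), integral_Ioc_eq_integral_Ioo]

lemma herglotzInt_eq_setIntegral (hφ : Function.Periodic φ (2 * π)) (r θ : ℝ) :
    herglotzInt φ (r * exp (θ * I)) =
      1 / (2 * π) * ∫ s in Ioo (-π) π, herglotzKer (r * exp (s * I)) * φ (θ - s) := by
  have hper : Function.Periodic (fun s : ℝ => herglotzKer (r * exp (s * I)) * φ (θ - s))
      (2 * π) := fun s => by
    simp only [sub_add_eq_sub_sub, hφ.sub_eq, ofReal_add, ofReal_mul, ofReal_ofNat, add_mul,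
      exp_add, exp_two_pi_mul_I, mul_one]
  have hreflect := intervalIntegral.integral_comp_sub_left (a := 0) (b := 2 * π)
    (fun s : ℝ => herglotzKer (r * exp (s * I)) * φ (θ - s)) θ
  have hshift := intervalIntegral_eq_setIntegral_of_periodic hper (θ - 2 * π)
  rw [sub_add_cancel] at hshift
  rw [sub_zero, hshift] at hreflect
  rw [← hreflect, herglotzInt]
  simp only [sub_sub_cancel, mul_assoc, ← exp_add, ofReal_sub, sub_mul, neg_mul,
    ← sub_eq_add_neg]

lemma I_mul_truncated_hilbert_eq_setIntegral (φ : ℝ → ℂ) (θ ε : ℝ) :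
    I * (1 / (2 * π) * ∫ t in Ioo (θ - π) (θ + π) \ Ioo (θ - ε) (θ + ε),
        φ t / (Real.tan ((θ - t) / 2) : ℂ)) =
      1 / (2 * π) * ∫ s in Ioo (-π) π,
        {s : ℝ | ε ≤ |s|}.indicator (fun s => herglotzKer (exp (s * I))) s * φ (θ - s) := by
  have hset : Ioo (-π) π \ Ioo (-ε) ε = Ioo (-π) π ∩ {s : ℝ | ε ≤ |s|} := by
    ext s
    simp only [Set.mem_sdiff, mem_inter_iff, mem_Ioo, mem_ofPred_eq, ← abs_lt, not_lt]
  have hmeas : MeasurableSet {s : ℝ | ε ≤ |s|} :=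
    measurableSet_le measurable_const measurable_id.abs
  rw [← setIntegral_comp_sub_left _ θ, preimage_sdiff, preimage_const_sub_Ioo,
    preimage_const_sub_Ioo]
  simp only [sub_add_cancel_left, sub_sub_cancel]
  rw [hset, ← setIntegral_indicator hmeas, mul_left_comm, ← integral_const_mul]
  congr 1
  refine setIntegral_congr_fun measurableSet_Ioo fun s _ => ?_
  by_cases hs : s ∈ {s : ℝ | ε ≤ |s|}
  · rw [indicator_of_mem hs, indicator_of_mem hs, herglotzKer_exp_mul_I]
    ring
  · rw [indicator_of_notMem hs, indicator_of_notMem hs, mul_zero, zero_mul]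

lemma setIntegral_indicator_herglotzKer_exp (ε : ℝ) :
    ∫ s in Ioo (-π) π, {s : ℝ | ε ≤ |s|}.indicator (fun s => herglotzKer (exp (s * I))) s = 0 := by
  set g : ℝ → ℂ := {s : ℝ | ε ≤ |s|}.indicator fun s => herglotzKer (exp (s * I)) with hg
  have hodd : ∀ s, g (-s) = -g s := fun s => by
    simp only [hg, indicator, mem_ofPred_eq, abs_neg, herglotzKer_exp_neg]
    split_ifs <;> simp
  have hreflect := setIntegral_comp_sub_left g 0 (Ioo (-π) π)
  rw [preimage_const_sub_Ioo] at hreflect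
  simp only [zero_sub, zero_add, sub_neg_eq_add, hodd,
    integral_neg] at hreflect
  exact self_eq_neg.1 hreflect.symm

lemma herglotzKer_integrableOn_mul {f : ℝ → ℂ} (hr : r ∈ Ioo (0 : ℝ) 1)
    (hf : IntegrableOn f (Ioo (-π) π)) :
    IntegrableOn (fun s : ℝ => herglotzKer (r * exp (s * I)) * f s) (Ioo (-π) π) := by
  refine hf.bdd_mul (c := 2 / (1 - r))
    (measurable_herglotzKer.comp (by fun_prop)).aestronglyMeasurable (.of_forall fun s => ?_)
  have hnorm := norm_ofReal_mul_exp_mul_I hr.1.le s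
  simpa only [hnorm] using norm_herglotzKer_le (hnorm.trans_lt hr.2)

lemma truncHerglotzKer_integrableOn_mul {f : ℝ → ℂ} (hr : r ∈ Ioo (0 : ℝ) 1)
    (hf : IntegrableOn f (Ioo (-π) π)) :
    IntegrableOn (fun s => truncHerglotzKer r s * f s) (Ioo (-π) π) := by
  have hr' : 0 < 1 - r := sub_pos.2 hr.2
  refine hf.bdd_mul (c := 2 * π ^ 2 * ((1 - r) / (1 - r) ^ 2))
    (measurable_truncHerglotzKer r).aestronglyMeasurable ?_
  filter_upwards [ae_restrict_mem measurableSet_Ioo] with s hs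
  refine (norm_truncHerglotzKer_le hr (abs_le.2 ⟨hs.1.le, hs.2.le⟩)).trans ?_
  gcongr
  exact le_add_of_nonneg_right (sq_nonneg s)

lemma setIntegral_truncHerglotzKer_mul {f : ℝ → ℂ} (hr : r ∈ Ioo (0 : ℝ) 1)
    (hf : IntegrableOn f (Ioo (-π) π)) :
    ∫ s in Ioo (-π) π, truncHerglotzKer r s * f s =
      (∫ s : ℝ in Ioo (-π) π, herglotzKer (r * exp (s * I)) * f s) - ∫ s in Ioo (-π) π,
        {s : ℝ | 1 - r ≤ |s|}.indicator (fun s => herglotzKer (exp (s * I))) s * f s := by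
  have hsub := integral_sub (herglotzKer_integrableOn_mul hr hf)
    (truncHerglotzKer_integrableOn_mul hr hf)
  simp only [truncHerglotzKer, ← sub_mul, sub_sub_cancel] at hsub
  rw [hsub, sub_sub_cancel]
  simp only [truncHerglotzKer]

lemma setIntegral_truncHerglotzKer (hr : r ∈ Ioo (0 : ℝ) 1) :
    ∫ s in Ioo (-π) π, truncHerglotzKer r s = 2 * π := by
  have hper : Function.Periodic (fun s : ℝ => herglotzKer (r * exp (s * I))) (2 * π) := fun s => by
    simp only [ofReal_add, ofReal_mul, ofReal_ofNat, add_mul, exp_add, exp_two_pi_mul_I, mul_one]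
  have hmean := integral_circle_of_differentiableOn differentiableOn_herglotzKer hr
  have hone := setIntegral_truncHerglotzKer_mul hr (f := fun _ => 1) (integrableOn_const (by simp))
  simp only [mul_one] at hone
  rw [hone, setIntegral_indicator_herglotzKer_exp, sub_zero,
    ← intervalIntegral_eq_setIntegral_of_periodic hper 0, zero_add, hmean]
  simp [herglotzKer]

lemma tendsto_one_sub_nhdsGT : Tendsto (fun r : ℝ => 1 - r) (𝓝[<] 1) (𝓝[>] 0) := by
  refine tendsto_nhdsWithin_iff.2 ⟨?_, ?_⟩
  · exact (Continuous.tendsto' (by fun_prop) 1 0 (sub_self 1)).mono_left nhdsWithin_le_nhds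
  · filter_upwards [self_mem_nhdsWithin] with r hr using sub_pos.2 (mem_Iio.1 hr)

lemma eventually_mem_Ioo_nhdsLT_one : ∀ᶠ r in 𝓝[<] (1 : ℝ), r ∈ Ioo (0 : ℝ) 1 :=
  Ioo_mem_nhdsLT zero_lt_one

lemma integrableOn_comp_sub_left (hφ : LocallyIntegrable φ) (θ : ℝ) :
    IntegrableOn (fun s => φ (θ - s)) (Ioo (-π) π) := by
  have hIoo : IntegrableOn φ (Ioo (θ - π) (θ + π)) :=
    (hφ.integrableOn_isCompact isCompact_Icc).mono_set Ioo_subset_Icc_self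
  have hcomp := ((Measure.measurePreserving_sub_left volume θ).integrableOn_comp_preimage
    (MeasurableEquiv.subLeft θ).measurableEmbedding).2 hIoo
  rwa [preimage_const_sub_Ioo, sub_add_cancel_left, sub_sub_cancel] at hcomp

lemma tendsto_setIntegral_truncHerglotzKer_mul (hφ : LocallyIntegrable φ)
    (hmean : Tendsto (fun h => (∫ s in Ioo (-h) h, ‖φ (θ - s) - φ θ‖) / h) (𝓝[>] 0) (𝓝 0)) :
    Tendsto (fun r => ∫ s in Ioo (-π) π, truncHerglotzKer r s * φ (θ - s)) (𝓝[<] 1)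
      (𝓝 (2 * π * φ θ)) := by
  refine tendsto_setIntegral_smul_of_tendsto_mean measurableSet_Ioo (by simp)
    tendsto_one_sub_nhdsGT (fun r => (measurable_truncHerglotzKer r).aestronglyMeasurable)
    (C := 2 * π ^ 2) ?_ ?_ (integrableOn_comp_sub_left hφ θ) ?_
  · filter_upwards [eventually_mem_Ioo_nhdsLT_one] with r hr s hs
    exact norm_truncHerglotzKer_le hr (abs_le.2 ⟨hs.1.le, hs.2.le⟩)
  · filter_upwards [eventually_mem_Ioo_nhdsLT_one] with r hr
    exact setIntegral_truncHerglotzKer hr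
  · refine hmean.congr' ?_
    filter_upwards [Ioo_mem_nhdsGT Real.pi_pos] with h hh
    rw [inter_eq_left.2 (Ioo_subset_Ioo (neg_le_neg hh.2.le) hh.2.le)]

lemma tendsto_herglotzInt_radial (hφ : LocallyIntegrable φ) (hper : Function.Periodic φ (2 * π))
    (hmean : Tendsto (fun h => (∫ s in Ioo (-h) h, ‖φ (θ - s) - φ θ‖) / h) (𝓝[>] 0) (𝓝 0))
    {L : ℂ} (hL : IsPVHilbert φ θ L) :
    Tendsto (fun r : ℝ => herglotzInt φ (r * exp (θ * I))) (𝓝[<] 1) (𝓝 (φ θ + I * L)) := by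
  have htrunc := (tendsto_setIntegral_truncHerglotzKer_mul hφ hmean).const_mul (1 / (2 * π) : ℂ)
  have hcoef : (1 / (2 * π) : ℂ) * (2 * π * φ θ) = φ θ := by
    field_simp
  rw [hcoef] at htrunc
  refine (htrunc.add ((hL.comp tendsto_one_sub_nhdsGT).const_mul I)).congr' ?_
  filter_upwards [eventually_mem_Ioo_nhdsLT_one] with r hr
  rw [Function.comp_apply, I_mul_truncated_hilbert_eq_setIntegral, ← mul_add,
    setIntegral_truncHerglotzKer_mul hr (integrableOn_comp_sub_left hφ θ), sub_add_cancel,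
    herglotzInt_eq_setIntegral hper]

lemma ae_tendsto_herglotzInt_radial (hφ : LocallyIntegrable φ)
    (hper : Function.Periodic φ (2 * π)) {H : ℝ → ℂ} (hH : ∀ᵐ θ, IsPVHilbert φ θ (H θ)) :
    ∀ᵐ θ : ℝ, Tendsto (fun r : ℝ => herglotzInt φ (r * exp (θ * I))) (𝓝[<] 1)
      (𝓝 (φ θ + I * H θ)) := by
  filter_upwards [ae_tendsto_mean_norm_comp_sub_left_sub hφ, hH] with θ hmean hHθ
  exact tendsto_herglotzInt_radial hφ hper hmean hHθ

end RadialLimits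

section SquareMeanControl

lemma norm_sub_min_natCast_le {a : ℝ} (ha : 0 ≤ a) (N : ℕ) : ‖a - min a N‖ ≤ a := by
  rw [Real.norm_of_nonneg (sub_nonneg.2 (min_le_left _ _))]
  exact sub_le_self _ (le_min ha N.cast_nonneg)

lemma mul_le_mul_sub_add_sq {u B a m c : ℝ} (hc : 0 < c) (hu : u ≤ B) (hm : m ≤ a) :
    u * a ≤ B * (a - m) + c * m ^ 2 + 1 / (4 * c) * u ^ 2 := by
  have hsq : u * m ≤ c * m ^ 2 + 1 / (4 * c) * u ^ 2 := by
    have : 0 ≤ 1 / (4 * c) * (u - 2 * c * m) ^ 2 := by positivity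
    field_simp at this ⊢
    linarith
  nlinarith [mul_le_mul_of_nonneg_right hu (sub_nonneg.2 hm)]

variable {α E : Type*} [MeasurableSpace α] {μ : Measure α} [NormedAddCommGroup E] {g : α → E}

lemma aestronglyMeasurable_min_norm (hg : AEStronglyMeasurable g μ) (M : ℝ) :
    AEStronglyMeasurable (fun x => min ‖g x‖ M) μ :=
  hg.norm.inf aestronglyMeasurable_const

lemma integrable_norm_sub_min (hg : Integrable g μ) (N : ℕ) :
    Integrable (fun x => ‖g x‖ - min ‖g x‖ N) μ :=
  hg.norm.mono' (hg.1.norm.sub (aestronglyMeasurable_min_norm hg.1 N))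
    (.of_forall fun x => norm_sub_min_natCast_le (norm_nonneg (g x)) N)

lemma integrable_min_norm_sq (hg : Integrable g μ) (N : ℕ) :
    Integrable (fun x => min ‖g x‖ N ^ 2) μ := by
  refine (hg.norm.const_mul (N : ℝ)).mono' ((aestronglyMeasurable_min_norm hg.1 N).pow 2)
    (.of_forall fun x => ?_)
  have hmin : 0 ≤ min ‖g x‖ (N : ℝ) := le_min (norm_nonneg _) N.cast_nonneg
  rw [Real.norm_of_nonneg (sq_nonneg _), sq]
  exact mul_le_mul (min_le_right _ _) (min_le_left _ _) hmin N.cast_nonneg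

lemma tendsto_integral_norm_sub_min (hg : Integrable g μ) :
    Tendsto (fun N : ℕ => ∫ x, (‖g x‖ - min ‖g x‖ N) ∂μ) atTop (𝓝 0) := by
  rw [← integral_zero α ℝ (μ := μ)]
  refine tendsto_integral_of_dominated_convergence (fun x => ‖g x‖)
    (fun N => (integrable_norm_sub_min hg N).1) hg.norm
    (fun N => .of_forall fun x => norm_sub_min_natCast_le (norm_nonneg (g x)) N)
    (.of_forall fun x => ?_)
  refine tendsto_const_nhds.congr' ?_
  filter_upwards [tendsto_natCast_atTop_atTop.eventually_ge_atTop ‖g x‖] with N hN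
  rw [min_eq_left hN, sub_self]

lemma exists_integral_mul_norm_le (hg : Integrable g μ) (B : ℝ) {δ : ℝ} (hδ : 0 < δ) :
    ∃ C ≥ 0, ∀ u : α → ℝ, (∀ x, 0 ≤ u x) → (∀ x, u x ≤ B) → Integrable (fun x => u x ^ 2) μ →
      ∫ x, u x * ‖g x‖ ∂μ ≤ δ + C * ∫ x, u x ^ 2 ∂μ := by
  have htail := (tendsto_integral_norm_sub_min hg).const_mul B
  rw [mul_zero] at htail
  obtain ⟨N, hN⟩ := (htail.eventually (gt_mem_nhds (half_pos hδ))).exists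
  set J := ∫ x, min ‖g x‖ N ^ 2 ∂μ
  have : 0 ≤ J := integral_nonneg fun x => sq_nonneg _
  set c := δ / (2 * (J + 1)) with hc
  have hc0 : 0 < c := by positivity
  have hcJ : c * J ≤ δ / 2 := by
    rw [hc, div_mul_eq_mul_div, div_le_iff₀ (by positivity)]
    nlinarith
  refine ⟨1 / (4 * c), by positivity, fun u hu0 huB hu2 => ?_⟩
  have htailI := (integrable_norm_sub_min hg N).const_mul B
  have hminI := (integrable_min_norm_sq hg N).const_mul c
  calc ∫ x, u x * ‖g x‖ ∂μ
      ≤ ∫ x, (B * (‖g x‖ - min ‖g x‖ N) + c * min ‖g x‖ N ^ 2 + 1 / (4 * c) * u x ^ 2) ∂μ :=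
        integral_mono_of_nonneg (.of_forall fun x => mul_nonneg (hu0 x) (norm_nonneg _))
          ((htailI.add hminI).add (hu2.const_mul _))
          (.of_forall fun x => mul_le_mul_sub_add_sq hc0 (huB x) (min_le_left _ _))
    _ = B * ∫ x, (‖g x‖ - min ‖g x‖ N) ∂μ + c * J + 1 / (4 * c) * ∫ x, u x ^ 2 ∂μ := by
        rw [integral_add (by exact htailI.add hminI) (hu2.const_mul _), integral_add htailI hminI,
          integral_const_mul, integral_const_mul, integral_const_mul]
    _ ≤ δ + 1 / (4 * c) * ∫ x, u x ^ 2 ∂μ := by linarith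

end SquareMeanControl

section PoissonIntegral

variable {φ ψ : ℝ → ℂ} {z : ℂ}

lemma continuous_poissonKer_mul_exp (hz : ‖z‖ < 1) :
    Continuous fun t : ℝ => poissonKer (z * exp (-(t : ℂ) * I)) := by
  simp only [← re_herglotzKer]
  exact continuous_re.comp (continuous_herglotzKer_mul_exp hz)

lemma norm_poissonKer_mul_exp_le (hz : ‖z‖ < 1) (t : ℝ) :
    ‖poissonKer (z * exp (-(t : ℂ) * I))‖ ≤ 2 / (1 - ‖z‖) := by
  have hker := norm_herglotzKer_le ((norm_mul_exp_neg_mul_I z t).trans_lt hz)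
  rw [norm_mul_exp_neg_mul_I] at hker
  rw [← re_herglotzKer]
  exact (abs_re_le_norm _).trans hker

lemma intervalIntegrable_poissonKer_mul (hφ : IntervalIntegrable φ volume 0 (2 * π))
    (hz : ‖z‖ < 1) :
    IntervalIntegrable (fun t => (poissonKer (z * exp (-(t : ℂ) * I)) : ℂ) * φ t)
      volume 0 (2 * π) :=
  hφ.continuousOn_mul (continuous_ofReal.comp (continuous_poissonKer_mul_exp hz)).continuousOn

lemma poissonIntR_sub (hφ : IntervalIntegrable φ volume 0 (2 * π))
    (hψ : IntervalIntegrable ψ volume 0 (2 * π)) (hz : ‖z‖ < 1) :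
    poissonIntR φ z - poissonIntR ψ z = poissonIntR (fun t => φ t - ψ t) z := by
  simp only [poissonIntR, mul_sub]
  rw [intervalIntegral.integral_sub (intervalIntegrable_poissonKer_mul hφ hz)
    (intervalIntegrable_poissonKer_mul hψ hz), mul_sub]

lemma norm_poissonIntR_le_integral_norm (φ : ℝ → ℂ) (z : ℂ) :
    ‖poissonIntR φ z‖ ≤ 1 / (2 * π) *
      ∫ t in (0 : ℝ)..(2 * π), ‖poissonKer (z * exp (-(t : ℂ) * I))‖ * ‖φ t‖ := by
  have hcoef : ‖(1 / (2 * π) : ℂ)‖ = 1 / (2 * π) := by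
    simp [abs_of_pos Real.pi_pos]
  rw [poissonIntR, norm_mul, hcoef]
  gcongr
  refine (intervalIntegral.norm_integral_le_integral_norm (by positivity)).trans_eq ?_
  simp only [norm_mul, norm_real]

lemma norm_poissonIntR_le (hφ : IntervalIntegrable φ volume 0 (2 * π)) (hz : ‖z‖ < 1) :
    ‖poissonIntR φ z‖ ≤ 1 / (2 * π) * (2 / (1 - ‖z‖)) * ∫ t in (0 : ℝ)..(2 * π), ‖φ t‖ := by
  refine (norm_poissonIntR_le_integral_norm φ z).trans ?_
  rw [mul_assoc]
  refine mul_le_mul_of_nonneg_left ?_ (by positivity)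
  rw [← intervalIntegral.integral_const_mul]
  refine intervalIntegral.integral_mono_on (by positivity) ?_ (hφ.norm.const_mul _) fun t _ => ?_
  · exact hφ.norm.continuousOn_mul (continuous_poissonKer_mul_exp hz).norm.continuousOn
  · exact mul_le_mul_of_nonneg_right (norm_poissonKer_mul_exp_le hz t) (norm_nonneg _)

end PoissonIntegral

/-- The Smirnov class `N⁺(𝔻)`, in multiplier form: `G` is analytic and there are analytic
functions `U n`, bounded by `1`, which tend to `1` and make each product `U n * G` bounded. -/
def MemSmirnov (G : ℂ → ℂ) : Prop :=
  DifferentiableOn ℂ G (ball 0 1) ∧ ∃ U : ℕ → ℂ → ℂ,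
    (∀ n, DifferentiableOn ℂ (U n) (ball 0 1)) ∧
    (∀ n, ∀ z ∈ ball (0 : ℂ) 1, ‖U n z‖ ≤ 1) ∧
    (∀ n, ∃ C, ∀ z ∈ ball (0 : ℂ) 1, ‖U n z * G z‖ ≤ C) ∧
    ∀ z ∈ ball (0 : ℂ) 1, Tendsto (fun n => U n z) atTop (𝓝 1)

section Smirnov

variable {G G₁ G₂ : ℂ → ℂ}

lemma MemSmirnov.add (h₁ : MemSmirnov G₁) (h₂ : MemSmirnov G₂) :
    MemSmirnov fun z => G₁ z + G₂ z := by
  obtain ⟨hd₁, U₁, hU₁, hle₁, hbdd₁, hlim₁⟩ := h₁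
  obtain ⟨hd₂, U₂, hU₂, hle₂, hbdd₂, hlim₂⟩ := h₂
  refine ⟨hd₁.add hd₂, fun n z => U₁ n z * U₂ n z, fun n => (hU₁ n).mul (hU₂ n),
    fun n z hz => ?_, fun n => ?_, fun z hz => ?_⟩
  · rw [norm_mul]
    exact mul_le_one₀ (hle₁ n z hz) (norm_nonneg _) (hle₂ n z hz)
  · obtain ⟨C₁, hC₁⟩ := hbdd₁ n
    obtain ⟨C₂, hC₂⟩ := hbdd₂ n
    refine ⟨C₁ + C₂, fun z hz => ?_⟩
    calc ‖U₁ n z * U₂ n z * (G₁ z + G₂ z)‖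
        = ‖U₂ n z * (U₁ n z * G₁ z) + U₁ n z * (U₂ n z * G₂ z)‖ := by ring_nf
      _ ≤ ‖U₂ n z‖ * ‖U₁ n z * G₁ z‖ + ‖U₁ n z‖ * ‖U₂ n z * G₂ z‖ := by
        rw [← norm_mul, ← norm_mul]
        exact norm_add_le _ _
      _ ≤ C₁ + C₂ := add_le_add
        ((mul_le_of_le_one_left (norm_nonneg _) (hle₂ n z hz)).trans (hC₁ z hz))
        ((mul_le_of_le_one_left (norm_nonneg _) (hle₁ n z hz)).trans (hC₂ z hz))
  · simpa only [mul_one] using (hlim₁ z hz).mul (hlim₂ z hz)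

lemma MemSmirnov.const_mul (h : MemSmirnov G) (c : ℂ) : MemSmirnov fun z => c * G z := by
  obtain ⟨hd, U, hU, hle, hbdd, hlim⟩ := h
  refine ⟨hd.const_mul c, U, hU, hle, fun n => ?_, hlim⟩
  obtain ⟨C, hC⟩ := hbdd n
  refine ⟨‖c‖ * C, fun z hz => ?_⟩
  rw [mul_left_comm, norm_mul]
  exact mul_le_mul_of_nonneg_left (hC z hz) (norm_nonneg c)

lemma MemSmirnov.congr (h : MemSmirnov G₁) (heq : ∀ z ∈ ball (0 : ℂ) 1, G₂ z = G₁ z) :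
    MemSmirnov G₂ := by
  obtain ⟨hd, U, hU, hle, hbdd, hlim⟩ := h
  refine ⟨hd.congr heq, U, hU, hle, fun n => ?_, hlim⟩
  obtain ⟨C, hC⟩ := hbdd n
  exact ⟨C, fun z hz => by simpa only [heq z hz] using hC z hz⟩

lemma one_le_norm_one_add_mul {w : ℂ} (hw : 0 ≤ w.re) {ε : ℝ} (hε : 0 ≤ ε) :
    1 ≤ ‖1 + (ε : ℂ) * w‖ := by
  refine le_trans ?_ (re_le_norm _)
  rw [add_re, one_re, re_ofReal_mul]
  exact le_add_of_nonneg_right (mul_nonneg hε hw)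

lemma norm_inv_one_add_mul_mul_le {w : ℂ} (hw : 0 ≤ w.re) {ε : ℝ} (hε : 0 < ε) :
    ‖(1 + (ε : ℂ) * w)⁻¹ * w‖ ≤ 2 / ε := by
  have hone := one_le_norm_one_add_mul hw hε.le
  have hεw : ε * ‖w‖ ≤ ‖1 + (ε : ℂ) * w‖ + 1 := by
    calc ε * ‖w‖ = ‖(1 + (ε : ℂ) * w) - 1‖ := by
          rw [add_sub_cancel_left, norm_mul, norm_real, Real.norm_of_nonneg hε.le]
      _ ≤ ‖1 + (ε : ℂ) * w‖ + 1 := (norm_sub_le _ _).trans_eq (by rw [norm_one])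
  rw [norm_mul, norm_inv, inv_mul_eq_div, div_le_div_iff₀ (by linarith) hε]
  linarith

lemma memSmirnov_of_re_nonneg (hG : DifferentiableOn ℂ G (ball 0 1))
    (hre : ∀ z ∈ ball (0 : ℂ) 1, 0 ≤ (G z).re) : MemSmirnov G := by
  have hε : ∀ n : ℕ, 0 < 1 / ((n : ℝ) + 1) := fun n => Nat.one_div_pos_of_nat
  have hone : ∀ n : ℕ, ∀ z ∈ ball (0 : ℂ) 1, 1 ≤ ‖1 + ((1 / (n + 1) : ℝ) : ℂ) * G z‖ :=
    fun n z hz => one_le_norm_one_add_mul (hre z hz) (hε n).le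
  refine ⟨hG, fun n z => (1 + ((1 / (n + 1) : ℝ) : ℂ) * G z)⁻¹, fun n => ?_, fun n z hz => ?_,
    fun n => ⟨2 / (1 / (n + 1)), fun z hz => norm_inv_one_add_mul_mul_le (hre z hz) (hε n)⟩,
    fun z _ => ?_⟩
  · exact ((hG.const_mul _).const_add 1).fun_inv fun z hz =>
      norm_pos_iff.1 (one_pos.trans_le (hone n z hz))
  · rw [norm_inv]
    exact inv_le_one_of_one_le₀ (hone n z hz)
  · have hlim := (continuous_ofReal.tendsto 0).comp
      (tendsto_one_div_add_atTop_nhds_zero_nat (𝕜 := ℝ))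
    simpa using ((hlim.mul_const (G z)).const_add 1).inv₀ (by simp)

lemma memSmirnov_herglotzInt_ofReal {u : ℝ → ℝ} (hu : IntervalIntegrable u volume 0 (2 * π))
    (hu0 : ∀ t, 0 ≤ u t) : MemSmirnov (herglotzInt fun t => (u t : ℂ)) :=
  memSmirnov_of_re_nonneg (differentiableOn_herglotzInt ⟨hu.1.ofReal, hu.2.ofReal⟩)
    fun _ hz => re_herglotzInt_ofReal_nonneg hu hu0 (mem_ball_zero_iff.1 hz)

lemma memSmirnov_herglotzInt {φ : ℝ → ℂ} (hφ : IntervalIntegrable φ volume 0 (2 * π)) :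
    MemSmirnov (herglotzInt φ) := by
  have hre : IntervalIntegrable (fun t => ‖φ t‖ + (φ t).re) volume 0 (2 * π) :=
    hφ.norm.add ⟨hφ.1.re, hφ.2.re⟩
  have him : IntervalIntegrable (fun t => ‖φ t‖ + (φ t).im) volume 0 (2 * π) :=
    hφ.norm.add ⟨hφ.1.im, hφ.2.im⟩
  have hreC : IntervalIntegrable (fun t => ((‖φ t‖ + (φ t).re : ℝ) : ℂ)) volume 0 (2 * π) :=
    ⟨hre.1.ofReal, hre.2.ofReal⟩
  have himC : IntervalIntegrable (fun t => I * ((‖φ t‖ + (φ t).im : ℝ) : ℂ)) volume 0 (2 * π) :=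
    IntervalIntegrable.const_mul ⟨him.1.ofReal, him.2.ofReal⟩ I
  have hnormC : IntervalIntegrable (fun t => -(1 + I) * (‖φ t‖ : ℂ)) volume 0 (2 * π) :=
    IntervalIntegrable.const_mul ⟨hφ.norm.1.ofReal, hφ.norm.2.ofReal⟩ _
  have hsplit : φ = fun t => ((‖φ t‖ + (φ t).re : ℝ) : ℂ) + I * ((‖φ t‖ + (φ t).im : ℝ) : ℂ) +
      -(1 + I) * (‖φ t‖ : ℂ) := by
    ext t
    conv_lhs => rw [← re_add_im (φ t)]
    push_cast
    ring
  refine (((memSmirnov_herglotzInt_ofReal hre fun t => ?_).add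
    ((memSmirnov_herglotzInt_ofReal him fun t => ?_).const_mul I)).add
    ((memSmirnov_herglotzInt_ofReal hφ.norm fun t => norm_nonneg _).const_mul (-(1 + I)))).congr
    fun z hz => ?_
  · linarith [neg_le_of_abs_le (abs_re_le_norm (φ t))]
  · linarith [neg_le_of_abs_le (abs_im_le_norm (φ t))]
  · rw [mem_ball_zero_iff] at hz
    conv_lhs => rw [hsplit]
    rw [herglotzInt_add (by exact hreC.add himC) hnormC hz, herglotzInt_add hreC himC hz,
      herglotzInt_const_mul, herglotzInt_const_mul]

end Smirnov

section SmirnovTheorem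

variable {U G : ℂ → ℂ} {g : ℝ → ℂ} {r : ℝ} {z : ℂ}

lemma sq_norm_one_sub_le {u : ℂ} (hu : ‖u‖ ≤ 1) : ‖1 - u‖ ^ 2 ≤ 2 * (1 - u.re) := by
  have hsq : ‖u‖ ^ 2 ≤ 1 := pow_le_one₀ (norm_nonneg u) hu
  rw [← normSq_eq_norm_sq, normSq_apply] at hsq ⊢
  simp only [sub_re, one_re, sub_im, one_im]
  linarith

lemma integral_sq_norm_one_sub_le (hU : DifferentiableOn ℂ U (ball 0 1))
    (hle : ∀ z ∈ ball (0 : ℂ) 1, ‖U z‖ ≤ 1) (hr : r ∈ Ioo (0 : ℝ) 1) :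
    ∫ t in (0 : ℝ)..(2 * π), ‖1 - U (r * exp (t * I))‖ ^ 2 ≤ 4 * π * (1 - (U 0).re) := by
  have hcont := continuous_circle_of_continuousOn hU.continuousOn hr
  have hre : ∫ t in (0 : ℝ)..(2 * π), (U (r * exp (t * I))).re = 2 * π * (U 0).re := by
    have hcomm := reCLM.intervalIntegral_comp_comm
      (hcont.intervalIntegrable (μ := volume) 0 (2 * π))
    rw [integral_circle_of_differentiableOn hU hr] at hcomm
    refine hcomm.trans ?_
    rw [reCLM_apply, ← ofReal_ofNat, ← ofReal_mul, re_ofReal_mul]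
  have hone : IntervalIntegrable (fun _ : ℝ => (1 : ℝ)) volume 0 (2 * π) := by simp
  have hint : IntervalIntegrable (fun t : ℝ => (U (r * exp (t * I))).re) volume 0 (2 * π) :=
    (continuous_re.comp hcont).intervalIntegrable 0 (2 * π)
  calc ∫ t in (0 : ℝ)..(2 * π), ‖1 - U (r * exp (t * I))‖ ^ 2
      ≤ ∫ t in (0 : ℝ)..(2 * π), 2 * (1 - (U (r * exp (t * I))).re) :=
        intervalIntegral.integral_mono_on (by positivity)
          (((continuous_const.sub hcont).norm.pow 2).intervalIntegrable _ _)
          ((hone.sub hint).const_mul 2)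
          fun t _ => sq_norm_one_sub_le (hle _ (ofReal_mul_exp_mul_I_mem_ball hr t))
    _ = 4 * π * (1 - (U 0).re) := by
        rw [intervalIntegral.integral_const_mul, intervalIntegral.integral_sub hone hint,
          intervalIntegral.integral_const, hre, smul_eq_mul]
        ring

lemma tendsto_integral_norm_mul_sub (hU : ContinuousOn U (ball 0 1))
    (hle : ∀ z ∈ ball (0 : ℂ) 1, ‖U z‖ ≤ 1) (hG : ContinuousOn G (ball 0 1)) {C : ℝ}
    (hbdd : ∀ z ∈ ball (0 : ℂ) 1, ‖U z * G z‖ ≤ C) (hg : IntervalIntegrable g volume 0 (2 * π))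
    (hlim : ∀ᵐ t : ℝ, Tendsto (fun r : ℝ => G (r * exp (t * I))) (𝓝[<] 1) (𝓝 (g t))) :
    Tendsto (fun r : ℝ => ∫ t in (0 : ℝ)..(2 * π),
      ‖U (r * exp (t * I)) * (G (r * exp (t * I)) - g t)‖) (𝓝[<] 1) (𝓝 0) := by
  have hgm := (intervalIntegrable_iff.1 hg).aestronglyMeasurable
  suffices hzero : Tendsto (fun r : ℝ => ∫ t in (0 : ℝ)..(2 * π),
      ‖U (r * exp (t * I)) * (G (r * exp (t * I)) - g t)‖) (𝓝[<] 1)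
      (𝓝 (∫ _ in (0 : ℝ)..(2 * π), (0 : ℝ))) by
    rwa [intervalIntegral.integral_zero] at hzero
  refine intervalIntegral.tendsto_integral_filter_of_dominated_convergence
    (fun t => C + ‖g t‖) ?_ ?_ (intervalIntegrable_const.add hg.norm) ?_
  · filter_upwards [eventually_mem_Ioo_nhdsLT_one] with r hr
    exact ((continuous_circle_of_continuousOn hU hr).aestronglyMeasurable.mul
      ((continuous_circle_of_continuousOn hG hr).aestronglyMeasurable.sub hgm)).norm
  · filter_upwards [eventually_mem_Ioo_nhdsLT_one] with r hr
    refine .of_forall fun t _ => ?_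
    have hmem := ofReal_mul_exp_mul_I_mem_ball hr t
    rw [norm_norm, mul_sub]
    refine (norm_sub_le _ _).trans (add_le_add (hbdd _ hmem) ?_)
    rw [norm_mul]
    exact mul_le_of_le_one_left (norm_nonneg _) (hle _ hmem)
  · filter_upwards [hlim] with t ht _
    refine squeeze_zero' (.of_forall fun r => norm_nonneg _) ?_
      (tendsto_iff_norm_sub_tendsto_zero.1 ht)
    filter_upwards [eventually_mem_Ioo_nhdsLT_one] with r hr
    rw [norm_mul]
    exact mul_le_of_le_one_left (norm_nonneg _) (hle _ (ofReal_mul_exp_mul_I_mem_ball hr t))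

lemma norm_mul_sub_poissonIntR_dilation_le (hU : DifferentiableOn ℂ U (ball 0 1))
    (hG : DifferentiableOn ℂ G (ball 0 1)) (hg : IntervalIntegrable g volume 0 (2 * π))
    (hr : r ∈ Ioo (0 : ℝ) 1) (hz : ‖z‖ < 1) :
    ‖U (r * z) * G (r * z) - poissonIntR g z‖ ≤ 1 / (2 * π) * (2 / (1 - ‖z‖)) *
      ((∫ t in (0 : ℝ)..(2 * π), ‖U (r * exp (t * I)) * (G (r * exp (t * I)) - g t)‖) +
        ∫ t in (0 : ℝ)..(2 * π), ‖1 - U (r * exp (t * I))‖ * ‖g t‖) := by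
  have hUc := continuous_circle_of_continuousOn hU.continuousOn hr
  have hGc := continuous_circle_of_continuousOn hG.continuousOn hr
  have hUG : IntervalIntegrable (fun t : ℝ => U (r * exp (t * I)) * G (r * exp (t * I)))
      volume 0 (2 * π) := (hUc.mul hGc).intervalIntegrable _ _
  have hdiff := (((hGc.intervalIntegrable _ _).sub hg).continuousOn_mul hUc.continuousOn).norm
  have hone : IntervalIntegrable (fun t : ℝ => ‖1 - U (r * exp (t * I))‖ * ‖g t‖)
      volume 0 (2 * π) := hg.norm.continuousOn_mul (continuous_const.sub hUc).norm.continuousOn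
  have : 0 < 1 - ‖z‖ := sub_pos.2 hz
  rw [apply_ofReal_mul_eq_poissonIntR (G := fun w => U w * G w) (hU.mul hG) hr hz,
    poissonIntR_sub hUG hg hz]
  refine (norm_poissonIntR_le (hUG.sub hg) hz).trans ?_
  gcongr
  rw [← intervalIntegral.integral_add hdiff hone]
  refine intervalIntegral.integral_mono_on (by positivity) (hUG.sub hg).norm (hdiff.add hone)
    fun t _ => ?_
  rw [← norm_mul, ← norm_neg ((1 - U (r * exp (t * I))) * g t)]
  exact (congr_arg norm (by ring)).trans_le (norm_add_le _ _)

lemma norm_mul_sub_poissonIntR_le (hU : DifferentiableOn ℂ U (ball 0 1))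
    (hle : ∀ z ∈ ball (0 : ℂ) 1, ‖U z‖ ≤ 1) (hG : DifferentiableOn ℂ G (ball 0 1)) {C : ℝ}
    (hbdd : ∀ z ∈ ball (0 : ℂ) 1, ‖U z * G z‖ ≤ C) (hg : IntervalIntegrable g volume 0 (2 * π))
    (hlim : ∀ᵐ t : ℝ, Tendsto (fun r : ℝ => G (r * exp (t * I))) (𝓝[<] 1) (𝓝 (g t)))
    {B : ℝ} (hB : ∀ r ∈ Ioo (0 : ℝ) 1,
      ∫ t in (0 : ℝ)..(2 * π), ‖1 - U (r * exp (t * I))‖ * ‖g t‖ ≤ B) (hz : ‖z‖ < 1) :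
    ‖U z * G z - poissonIntR g z‖ ≤ 1 / (2 * π) * (2 / (1 - ‖z‖)) * B := by
  have hzr : Tendsto (fun r : ℝ => (r : ℂ) * z) (𝓝[<] 1) (𝓝 z) :=
    (Continuous.tendsto' (by fun_prop) 1 z (by simp)).mono_left nhdsWithin_le_nhds
  have hleft := ((((hU.mul hG).continuousOn.continuousAt
    (isOpen_ball.mem_nhds (mem_ball_zero_iff.2 hz))).tendsto.comp hzr).sub_const
      (poissonIntR g z)).norm
  have hright := ((tendsto_integral_norm_mul_sub hU.continuousOn hle hG.continuousOn hbdd hg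
    hlim).add_const B).const_mul (1 / (2 * π) * (2 / (1 - ‖z‖)))
  rw [zero_add] at hright
  refine le_of_tendsto_of_tendsto hleft hright ?_
  filter_upwards [eventually_mem_Ioo_nhdsLT_one] with r hr
  have : 0 < 1 - ‖z‖ := sub_pos.2 hz
  refine (norm_mul_sub_poissonIntR_dilation_le hU hG hg hr hz).trans ?_
  gcongr
  exact hB r hr

lemma exists_norm_mul_sub_poissonIntR_le (hG : DifferentiableOn ℂ G (ball 0 1))
    (hg : IntervalIntegrable g volume 0 (2 * π))
    (hlim : ∀ᵐ t : ℝ, Tendsto (fun r : ℝ => G (r * exp (t * I))) (𝓝[<] 1) (𝓝 (g t)))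
    {δ : ℝ} (hδ : 0 < δ) (hz : ‖z‖ < 1) :
    ∃ C, ∀ U : ℂ → ℂ, DifferentiableOn ℂ U (ball 0 1) → (∀ w ∈ ball (0 : ℂ) 1, ‖U w‖ ≤ 1) →
      (∃ M, ∀ w ∈ ball (0 : ℂ) 1, ‖U w * G w‖ ≤ M) → ‖U z * G z - poissonIntR g z‖ ≤
        1 / (2 * π) * (2 / (1 - ‖z‖)) * (δ + C * (4 * π * (1 - (U 0).re))) := by
  obtain ⟨C, hC0, hC⟩ := exists_integral_mul_norm_le
    ((intervalIntegrable_iff_integrableOn_Ioc_of_le (by positivity)).1 hg) 2 hδ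
  refine ⟨C, fun U hU hle ⟨M, hM⟩ =>
    norm_mul_sub_poissonIntR_le hU hle hG hM hg hlim (fun r hr => ?_) hz⟩
  have hsq := integral_sq_norm_one_sub_le hU hle hr
  have hcont := continuous_circle_of_continuousOn hU.continuousOn hr
  rw [intervalIntegral.integral_of_le (by positivity)] at hsq ⊢
  refine (hC _ (fun t => norm_nonneg _) (fun t => ?_) ?_).trans (by gcongr)
  · refine (norm_sub_le _ _).trans ?_
    rw [norm_one, ← one_add_one_eq_two]
    gcongr
    exact hle _ (ofReal_mul_exp_mul_I_mem_ball hr t)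
  · exact (((continuous_const.sub hcont).norm.pow 2).intervalIntegrable 0 (2 * π)).1

theorem MemSmirnov.eq_poissonIntR (hG : MemSmirnov G) (hg : IntervalIntegrable g volume 0 (2 * π))
    (hlim : ∀ᵐ t : ℝ, Tendsto (fun r : ℝ => G (r * exp (t * I))) (𝓝[<] 1) (𝓝 (g t)))
    (hz : ‖z‖ < 1) : G z = poissonIntR g z := by
  obtain ⟨hGd, U, hU, hle, hbdd, hUlim⟩ := hG
  set K := 1 / (2 * π) * (2 / (1 - ‖z‖))
  have hK0 : 0 < K := by
    have : 0 < 1 - ‖z‖ := sub_pos.2 hz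
    positivity
  have hbound : ∀ δ > 0, ‖G z - poissonIntR g z‖ ≤ K * δ := fun δ hδ => by
    obtain ⟨C, hC⟩ := exists_norm_mul_sub_poissonIntR_le hGd hg hlim hδ hz
    have hzlim := (((hUlim z (mem_ball_zero_iff.2 hz)).mul_const (G z)).sub_const
      (poissonIntR g z)).norm
    have hre := (continuous_re.tendsto 1).comp (hUlim 0 (mem_ball_self one_pos))
    have hrhs := ((((hre.const_sub 1).const_mul (4 * π)).const_mul C).const_add δ).const_mul K
    simp only [one_mul, one_re, sub_self, mul_zero, add_zero] at hzlim hrhs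
    exact le_of_tendsto_of_tendsto' hzlim hrhs fun n => hC (U n) (hU n) (hle n) (hbdd n)
  refine sub_eq_zero.1 (norm_le_zero_iff.1 (le_of_forall_pos_le_add fun ε hε => ?_))
  simpa [mul_div_cancel₀ ε hK0.ne'] using hbound (ε / K) (by positivity)

end SmirnovTheorem

section HardySpace

variable {G G₁ G₂ : ℂ → ℂ} {p r : ℝ}

lemma integral_circle_norm_rpow_nonneg (p : ℝ) (G : ℂ → ℂ) (r : ℝ) :
    0 ≤ ∫ θ in (0 : ℝ)..(2 * π), ‖G (r * exp (θ * I))‖ ^ p :=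
  intervalIntegral.integral_nonneg (by positivity) fun _ _ => by positivity

lemma Mp_nonneg (p : ℝ) (G : ℂ → ℂ) (r : ℝ) : 0 ≤ Mp p G r := by
  have hint := integral_circle_norm_rpow_nonneg p G r
  rw [Mp]
  positivity

lemma Mp_congr (p : ℝ) (heq : ∀ z ∈ ball (0 : ℂ) 1, G₁ z = G₂ z) (hr : r ∈ Ioo (0 : ℝ) 1) :
    Mp p G₁ r = Mp p G₂ r := by
  simp only [Mp, heq _ (ofReal_mul_exp_mul_I_mem_ball hr _)]

lemma MemHp.congr (h : MemHp p G₁) (heq : ∀ z ∈ ball (0 : ℂ) 1, G₁ z = G₂ z) : MemHp p G₂ := by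
  obtain ⟨hd, M, hM⟩ := h
  exact ⟨hd.congr fun z hz => (heq z hz).symm, M, fun r hr => Mp_congr p heq hr ▸ hM r hr⟩

lemma Mp_le_of_norm_le (hp : 0 < p) {B : ℝ} (hB : ∀ θ : ℝ, ‖G (r * exp (θ * I))‖ ≤ B) :
    Mp p G r ≤ B := by
  have hB0 : 0 ≤ B := (norm_nonneg _).trans (hB 0)
  have hint : ∫ θ in (0 : ℝ)..(2 * π), ‖G (r * exp (θ * I))‖ ^ p ≤ B ^ p * (2 * π) := by
    refine (Real.le_norm_self _).trans ((intervalIntegral.norm_integral_le_of_norm_le_const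
      (C := B ^ p) fun θ _ => ?_).trans_eq ?_)
    · rw [Real.norm_of_nonneg (by positivity)]
      exact Real.rpow_le_rpow (norm_nonneg _) (hB θ) hp.le
    · rw [sub_zero, abs_of_pos Real.two_pi_pos]
  have hint0 := integral_circle_norm_rpow_nonneg p G r
  rw [Mp, one_div p, Real.rpow_inv_le_iff_of_pos (by positivity) hB0 hp, one_div,
    inv_mul_le_iff₀' (by positivity)]
  exact hint

lemma Mp_const_mul_id_mul (hp : p ≠ 0) (hr : 0 ≤ r) (c : ℂ) (G : ℂ → ℂ) :
    Mp p (fun z => c * z * G z) r = ‖c‖ * r * Mp p G r := by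
  have hnorm (θ : ℝ) : ‖c * (r * exp (θ * I)) * G (r * exp (θ * I))‖ ^ p =
      (‖c‖ * r) ^ p * ‖G (r * exp (θ * I))‖ ^ p := by
    rw [norm_mul, norm_mul, norm_ofReal_mul_exp_mul_I hr,
      Real.mul_rpow (by positivity) (norm_nonneg _)]
  have hint := integral_circle_norm_rpow_nonneg p G r
  simp only [Mp, hnorm]
  rw [intervalIntegral.integral_const_mul, mul_left_comm,
    Real.mul_rpow (by positivity) (by positivity), one_div p,
    Real.rpow_rpow_inv (by positivity) hp]

lemma memHp_const_mul_id_mul_iff (hp : 0 < p) {c : ℂ} (hc : c ≠ 0)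
    (hG : DifferentiableOn ℂ G (ball 0 1)) :
    MemHp p (fun z => c * z * G z) ↔ MemHp p G := by
  have hscale (r : ℝ) (hr : r ∈ Ioo (0 : ℝ) 1) := Mp_const_mul_id_mul hp.ne' hr.1.le c G
  constructor
  · rintro ⟨-, M, hM⟩
    obtain ⟨B, hB⟩ := (isCompact_closedBall (0 : ℂ) (1 / 2)).exists_bound_of_continuousOn
      (hG.continuousOn.mono (closedBall_subset_ball (by norm_num)))
    refine ⟨hG, max B (2 * M / ‖c‖), fun r hr => ?_⟩
    rcases le_or_gt r (1 / 2) with hsmall | hlarge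
    · refine le_max_of_le_left (Mp_le_of_norm_le hp fun θ => hB _ ?_)
      rwa [mem_closedBall_zero_iff, norm_ofReal_mul_exp_mul_I hr.1.le]
    · refine le_max_of_le_right ((le_div_iff₀ (norm_pos_iff.2 hc)).2 ?_)
      have hMr : ‖c‖ * r * Mp p G r ≤ M := hscale r hr ▸ hM r hr
      have hhalf := mul_le_mul_of_nonneg_left hlarge.le
        (mul_nonneg (norm_nonneg c) (Mp_nonneg p G r))
      linarith
  · rintro ⟨-, M, hM⟩
    refine ⟨(differentiableOn_id.const_mul c).mul hG, ‖c‖ * M, fun r hr => ?_⟩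
    rw [hscale r hr, mul_assoc]
    gcongr
    exact (mul_le_of_le_one_left (Mp_nonneg p G r) hr.2.le).trans (hM r hr)

lemma eLpNorm_circle_eq (hp : 0 < p) (hG : ContinuousOn G (ball 0 1)) (hr : r ∈ Ioo (0 : ℝ) 1) :
    eLpNorm (fun θ : ℝ => G (r * exp (θ * I))) (ENNReal.ofReal p)
        (volume.restrict (Ioc 0 (2 * π))) =
      ENNReal.ofReal ((2 * π) ^ (1 / p) * Mp p G r) := by
  have hcont := continuous_circle_of_continuousOn hG hr
  have hmem : MemLp (fun θ : ℝ => G (r * exp (θ * I))) (ENNReal.ofReal p)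
      (volume.restrict (Ioc 0 (2 * π))) := by
    obtain ⟨B, hB⟩ := isCompact_Icc.exists_bound_of_continuousOn
      (hcont.continuousOn (s := Icc 0 (2 * π)))
    exact .of_bound hcont.aestronglyMeasurable B
      ((ae_restrict_iff' measurableSet_Ioc).2
        (.of_forall fun θ hθ => hB θ (Ioc_subset_Icc_self hθ)))
  have hint := integral_circle_norm_rpow_nonneg p G r
  rw [hmem.eLpNorm_eq_integral_rpow_norm (ENNReal.ofReal_pos.2 hp).ne' ENNReal.ofReal_ne_top,
    ENNReal.toReal_ofReal hp.le, ← intervalIntegral.integral_of_le (by positivity), Mp,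
    ← Real.mul_rpow (by positivity) (by positivity), ← mul_assoc,
    mul_one_div_cancel (by positivity), one_mul, one_div]

lemma MemHp.memLpT_of_tendsto (hp : 0 < p) (hG : MemHp p G) {g : ℝ → ℂ}
    (hlim : ∀ᵐ t : ℝ, Tendsto (fun r : ℝ => G (r * exp (t * I))) (𝓝[<] 1) (𝓝 (g t))) :
    MemLpT (ENNReal.ofReal p) g := by
  obtain ⟨hd, M, hM⟩ := hG
  obtain ⟨r, -, hr, hr1⟩ := exists_seq_strictMono_tendsto' (zero_lt_one (α := ℝ))
  have hmeas (n : ℕ) : AEStronglyMeasurable (fun t : ℝ => G (r n * exp (t * I)))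
      (volume.restrict (Ioc 0 (2 * π))) :=
    (continuous_circle_of_continuousOn hd.continuousOn (hr n)).aestronglyMeasurable
  have hlim' : ∀ᵐ t : ℝ ∂volume.restrict (Ioc 0 (2 * π)),
      Tendsto (fun n => G (r n * exp (t * I))) atTop (𝓝 (g t)) := by
    filter_upwards [ae_restrict_of_ae hlim] with t ht
    exact ht.comp (tendsto_nhdsWithin_iff.2 ⟨hr1, .of_forall fun n => (hr n).2⟩)
  refine ⟨aestronglyMeasurable_of_tendsto_ae atTop hmeas hlim',
    (Lp.eLpNorm_le_of_ae_tendsto (.of_forall fun n => ?_) hmeas hlim').trans_lt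
      (ENNReal.ofReal_lt_top (r := (2 * π) ^ (1 / p) * M))⟩
  rw [eLpNorm_circle_eq hp hd.continuousOn (hr n)]
  gcongr
  exact hM _ (hr n)

lemma integral_norm_poissonKer_mul_exp (hr : r ∈ Ioo (0 : ℝ) 1) (t : ℝ) :
    ∫ θ in (0 : ℝ)..(2 * π), ‖poissonKer (r * exp (θ * I) * exp (-(t : ℂ) * I))‖ = 2 * π := by
  refine Eq.trans ?_ (integral_poissonKer_mul_exp hr t)
  refine intervalIntegral.integral_congr fun θ _ => Real.norm_of_nonneg (poissonKer_nonneg ?_)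
  rw [norm_mul_exp_neg_mul_I, norm_ofReal_mul_exp_mul_I hr.1.le]
  exact hr.2.le

lemma integrable_norm_poissonKer_mul_norm {g : ℝ → ℂ} {μ ν : Measure ℝ} [IsFiniteMeasure μ]
    [SFinite ν] (hg : Integrable g ν) (hr : r ∈ Ioo (0 : ℝ) 1) :
    Integrable (Function.uncurry fun θ t : ℝ =>
      ‖poissonKer (r * exp (θ * I) * exp (-(t : ℂ) * I))‖ * ‖g t‖) (μ.prod ν) := by
  have hmeas : Measurable fun q : ℝ × ℝ =>
      ‖poissonKer (r * exp (q.1 * I) * exp (-(q.2 : ℂ) * I))‖ := by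
    simp only [poissonKer]
    fun_prop
  refine (hg.norm.comp_snd μ).bdd_mul (c := 2 / (1 - r)) hmeas.aestronglyMeasurable
    (.of_forall fun q => ?_)
  have hnorm := norm_ofReal_mul_exp_mul_I hr.1.le q.1
  have hker := norm_poissonKer_mul_exp_le (hnorm.trans_lt hr.2) q.2
  rwa [hnorm, ← norm_norm] at hker

lemma integral_norm_poissonIntR_le {g : ℝ → ℂ} (hg : IntervalIntegrable g volume 0 (2 * π))
    (hr : r ∈ Ioo (0 : ℝ) 1) :
    ∫ θ in (0 : ℝ)..(2 * π), ‖poissonIntR g (r * exp (θ * I))‖ ≤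
      ∫ t in (0 : ℝ)..(2 * π), ‖g t‖ := by
  have hle := Real.two_pi_pos.le
  have hker := integral_norm_poissonKer_mul_exp hr
  simp only [intervalIntegral.integral_of_le hle] at hker ⊢
  set μ := volume.restrict (Ioc (0 : ℝ) (2 * π))
  have hint := integrable_norm_poissonKer_mul_norm (μ := μ) (ν := μ)
    ((intervalIntegrable_iff_integrableOn_Ioc_of_le hle).1 hg) hr
  calc ∫ θ, ‖poissonIntR g (r * exp (θ * I))‖ ∂μ
      ≤ ∫ θ : ℝ, 1 / (2 * π) *
          ∫ t : ℝ, ‖poissonKer (r * exp (θ * I) * exp (-(t : ℂ) * I))‖ * ‖g t‖ ∂μ ∂μ :=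
        integral_mono_of_nonneg (.of_forall fun θ => norm_nonneg _)
          (hint.integral_prod_left.const_mul _) (.of_forall fun θ =>
            (norm_poissonIntR_le_integral_norm g _).trans_eq
              (by rw [intervalIntegral.integral_of_le hle]))
    _ = 1 / (2 * π) * ∫ t : ℝ, ∫ θ : ℝ,
          ‖poissonKer (r * exp (θ * I) * exp (-(t : ℂ) * I))‖ * ‖g t‖ ∂μ ∂μ := by
        rw [integral_const_mul, integral_integral_swap hint]
    _ = ∫ t, ‖g t‖ ∂μ := by
        simp only [integral_mul_const, hker]
        rw [integral_const_mul, ← mul_assoc, one_div_mul_cancel Real.two_pi_pos.ne', one_mul]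

lemma Mp_one_poissonIntR_le {g : ℝ → ℂ} (hg : IntervalIntegrable g volume 0 (2 * π))
    (hr : r ∈ Ioo (0 : ℝ) 1) : Mp 1 (poissonIntR g) r ≤ lpNormT 1 g := by
  simp only [Mp, lpNormT, Real.rpow_one, div_one]
  exact mul_le_mul_of_nonneg_left (integral_norm_poissonIntR_le hg hr) (by positivity)

lemma memHp_one_of_eq_poissonIntR (hG : DifferentiableOn ℂ G (ball 0 1)) {g : ℝ → ℂ}
    (hg : IntervalIntegrable g volume 0 (2 * π))
    (heq : ∀ z ∈ ball (0 : ℂ) 1, G z = poissonIntR g z) : MemHp 1 G :=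
  ⟨hG, lpNormT 1 g, fun _ hr => (Mp_congr 1 heq hr).trans_le (Mp_one_poissonIntR_le hg hr)⟩

end HardySpace

section HilbertTransform

variable {φ H : ℝ → ℂ}

lemma IsPVHilbert.conj {θ : ℝ} {L : ℂ} (h : IsPVHilbert φ θ L) :
    IsPVHilbert (fun t => (starRingEnd ℂ) (φ t)) θ ((starRingEnd ℂ) L) := by
  refine ((continuous_conj.tendsto L).comp h).congr fun ε => ?_
  simp only [Function.comp, map_mul, map_div₀, map_one, map_ofNat, conj_ofReal, ← integral_conj]

lemma memLpT_one_iff_intervalIntegrable :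
    MemLpT 1 φ ↔ IntervalIntegrable φ volume 0 (2 * π) :=
  memLp_one_iff_integrable.trans
    (intervalIntegrable_iff_integrableOn_Ioc_of_le Real.two_pi_pos.le).symm

lemma memLpT_conj_iff {p : ℝ≥0∞} :
    MemLpT p (fun t => (starRingEnd ℂ) (φ t)) ↔ MemLpT p φ := by
  refine ⟨fun h => ?_, MemLp.star⟩
  have hstar : MemLpT p fun t => (starRingEnd ℂ) ((starRingEnd ℂ) (φ t)) := MemLp.star h
  simpa only [conj_conj] using hstar

lemma herglotzInt_eq_poissonIntR (hφ : LocallyIntegrable φ)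
    (hper : Function.Periodic φ (2 * π)) (hH : ∀ᵐ θ : ℝ, IsPVHilbert φ θ (H θ))
    (hHint : IntervalIntegrable H volume 0 (2 * π)) {z : ℂ} (hz : ‖z‖ < 1) :
    herglotzInt φ z = poissonIntR (fun t => φ t + I * H t) z := by
  have hint := (hφ.integrableOn_isCompact isCompact_uIcc).intervalIntegrable
    (a := 0) (b := 2 * π)
  exact (memSmirnov_herglotzInt hint).eq_poissonIntR (hint.add (hHint.const_mul I))
    (ae_tendsto_herglotzInt_radial hφ hper hH) hz

theorem memHp_one_herglotzInt_iff (hφ : LocallyIntegrable φ)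
    (hper : Function.Periodic φ (2 * π)) (hH : ∀ᵐ θ : ℝ, IsPVHilbert φ θ (H θ)) :
    MemHp 1 (herglotzInt φ) ↔ MemLpT 1 H := by
  have hint := (hφ.integrableOn_isCompact isCompact_uIcc).intervalIntegrable
    (a := 0) (b := 2 * π)
  constructor
  · intro hHp
    have hbdry : MemLpT 1 fun t => φ t + I * H t := ENNReal.ofReal_one ▸
      hHp.memLpT_of_tendsto one_pos (ae_tendsto_herglotzInt_radial hφ hper hH)
    rw [memLpT_one_iff_intervalIntegrable] at hbdry ⊢
    have hrecover : H = fun t => -I * (φ t + I * H t - φ t) := by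
      ext t
      linear_combination H t * I_mul_I
    rw [hrecover]
    exact (hbdry.sub hint).const_mul (-I)
  · intro hL
    have hHint := memLpT_one_iff_intervalIntegrable.1 hL
    exact memHp_one_of_eq_poissonIntR (differentiableOn_herglotzInt hint)
      (hint.add (hHint.const_mul I)) fun z hz =>
        herglotzInt_eq_poissonIntR hφ hper hH hHint (mem_ball_zero_iff.1 hz)

theorem memHp_one_wdz_poissonInt_iff {F : ℂ → ℂ} {Fd HF : ℝ → ℂ} (hF : IsACDeriv F Fd)
    (hHF : ∀ᵐ θ : ℝ, IsPVHilbert Fd θ (HF θ)) :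
    MemHp 1 (wdz (poissonInt F)) ↔ MemLpT 1 HF := by
  have hrel (z : ℂ) (hz : z ∈ ball 0 1) := two_I_mul_wdz_poissonInt hF (mem_ball_zero_iff.1 hz)
  rw [← memHp_const_mul_id_mul_iff one_pos (mul_ne_zero two_ne_zero I_ne_zero)
      (differentiableOn_wdz_poissonInt hF.intervalIntegrable_circle),
    ← memHp_one_herglotzInt_iff hF.locallyIntegrable hF.2.1 hHF]
  exact ⟨fun h => h.congr hrel, fun h => h.congr fun z hz => (hrel z hz).symm⟩

end HilbertTransform

/-- For `F : 𝕋 → ℂ` absolutely continuous with `Ḟ ∈ L¹(𝕋)` and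
`f = P[F]`: `f_z` and `conj (f_z̄)` lie in `H¹(𝔻)` iff the Hilbert transform `H(Ḟ)`
lies in `L¹(𝕋)`, and in that case `2 i z f_z(z) = P[Ḟ + i H(Ḟ)](z)` on `𝔻`. -/
theorem stmt1 (F : ℂ → ℂ) (Fd HF : ℝ → ℂ)
    (hF : IsACDeriv F Fd) (hL1 : MemLpT 1 Fd)
    (hHF : ∀ᵐ θ : ℝ, IsPVHilbert Fd θ (HF θ)) :
    ((MemHp 1 (wdz (poissonInt F)) ∧
        MemHp 1 (fun z => (starRingEnd ℂ) (wdzb (poissonInt F) z))) ↔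
      MemLpT 1 HF) ∧
    (MemLpT 1 HF →
      ∀ z ∈ ball (0:ℂ) 1,
        2 * Complex.I * z * wdz (poissonInt F) z
          = poissonIntR (fun t => Fd t + Complex.I * HF t) z) := by
  constructor
  · simp only [conj_wdzb_poissonInt]
    rw [memHp_one_wdz_poissonInt_iff hF hHF,
      memHp_one_wdz_poissonInt_iff hF.conj (hHF.mono fun _ h => h.conj), memLpT_conj_iff, and_self]
  · intro hHF1 z hz
    rw [mem_ball_zero_iff] at hz
    rw [two_I_mul_wdz_poissonInt hF hz]
    exact herglotzInt_eq_poissonIntR hF.locallyIntegrable hF.2.1 hHF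
      (memLpT_one_iff_intervalIntegrable.1 hHF1) hz

end
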